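/- arXiv:1112.4071 — 11 statements merged into one kernel-verified Lean document; each statement's English description precedes it below -/
import Mathlib

section
/- Let n be a positive integer and let λ_1, …, λ_n be distinct real numbers with λ_j > −1/2 for all j. Define a_{j,n} = (∏_{l=1}^n (λ_j + λ_l + 1)) / (∏_{l=1, l≠j}^n (λ_j − λ_l)). Then for every k ∈ {1, …, n} it holds that ∑_{j=1}^n a_{j,n} / (λ_j + λ_k + 1) = 1. -/
open Finset

/-- The coefficients `a_{j,n}` of the Müntz polynomial `K_n`. -/
noncomputable def muntzA (lam : ℕ → ℝ) (n j : ℕ) : ℝ :=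
  (∏ l ∈ Finset.Icc 1 n, (lam j + lam l + 1)) /
    (∏ l ∈ (Finset.Icc 1 n).erase j, (lam j - lam l))

/-!
Put `x j = λ_j` and `y l = λ_l + 1`. Cancelling the factor `x j + y k`, the `j`-th summand becomes
`P (x j) / ∏ i ≠ j, (x j - x i)`, where `P = ∏ l ≠ k, (X + y l)`. Since `P` has degree `n - 1`,
it equals its Lagrange interpolant at the `n` nodes `x j`, whose coefficient of `X ^ (n - 1)` is
the sum of these quotients; and `P` is monic.
-/

section Field

variable {ι κ K : Type*} [DecidableEq ι] [Field K] {s : Finset ι} {t : Finset κ} {x : ι → K}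

theorem sum_prod_add_div_prod_sub_eq_one (hx : Set.InjOn x s) (hst : #s = #t + 1) (y : κ → K) :
    ∑ j ∈ s, (∏ l ∈ t, (x j + y l)) / ∏ i ∈ s.erase j, (x j - x i) = 1 := by
  let P := Lagrange.nodal t fun l => -y l
  have hdeg : #s = P.degree + 1 := by
    rw [Lagrange.degree_nodal, hst, Nat.cast_add_one]
  calc ∑ j ∈ s, (∏ l ∈ t, (x j + y l)) / ∏ i ∈ s.erase j, (x j - x i)
      = ∑ j ∈ s, P.eval (x j) / ∏ i ∈ s.erase j, (x j - x i) := by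
        simp only [P, Lagrange.eval_nodal, sub_neg_eq_add]
    _ = P.leadingCoeff := (Lagrange.leadingCoeff_eq_sum hx hdeg).symm
    _ = 1 := Lagrange.nodal_monic.leadingCoeff

theorem muntz_system_general {y : κ → K} {k : κ} (hx : Set.InjOn x s) (hst : #s = #t)
    (hk : k ∈ t) (hxy : ∀ j ∈ s, x j + y k ≠ 0) :
    ∑ j ∈ s, (∏ l ∈ t, (x j + y l)) / (∏ i ∈ s.erase j, (x j - x i)) / (x j + y k) = 1 := by
  classical
  have hcard : #s = #(t.erase k) + 1 := by rw [hst, card_erase_add_one hk]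
  rw [← sum_prod_add_div_prod_sub_eq_one hx hcard y]
  refine sum_congr rfl fun j hj => ?_
  rw [← mul_prod_erase t _ hk, div_right_comm, mul_div_cancel_left₀ _ (hxy j hj)]

end Field

theorem muntz_system (n : ℕ) (hn : 1 ≤ n) (lam : ℕ → ℝ)
    (hpos : ∀ j ∈ Finset.Icc 1 n, lam j > -(1/2 : ℝ))
    (hdist : ∀ j ∈ Finset.Icc 1 n, ∀ k ∈ Finset.Icc 1 n, j ≠ k → lam j ≠ lam k) :
    ∀ k ∈ Finset.Icc 1 n, ∑ j ∈ Finset.Icc 1 n, muntzA lam n j / (lam j + lam k + 1) = 1 := by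
  intro k hk
  have hinj : Set.InjOn lam (Icc 1 n) := fun i hi j hj => not_imp_not.mp (hdist i hi j hj)
  have hne : ∀ j ∈ Icc 1 n, lam j + (lam k + 1) ≠ 0 := fun j hj => by
    linarith [hpos j hj, hpos k hk]
  simpa only [muntzA, add_assoc] using
    muntz_system_general (y := fun l => lam l + 1) hinj rfl hk hne
end

section
/- Let n be a positive integer, let λ_1, …, λ_n be distinct real numbers with λ_j > −1/2, and let a_{j,n} = (∏_{l=1}^n (λ_j + λ_l + 1)) / (∏_{l=1, l≠j}^n (λ_j − λ_l)). Then for every real x with x ≠ −λ_j − 1 for all j ∈ {1, …, n}, one has ∏_{j=1}^n (x − λ_j)/(x + λ_j + 1) = 1 − ∑_{j=1}^n a_{j,n}/(x + λ_j + 1). -/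
open Finset

/-!
The difference of the monic polynomials `∏ (X - u i)` and `∏ (X - v i)` has degree below the number
of nodes `v i`, so it equals its Lagrange interpolant at these nodes; dividing by `∏ (X - v i)`
gives the partial fraction expansion of `∏ (X - u i) / (X - v i)`. With `y = -x - 1`, each factor
`(x - λ_j) / (x + λ_j + 1)` becomes `(y + λ_j + 1) / (y - λ_j)`, whose poles are the `λ_j`
themselves, so that the coefficients `a_{j,n}` appear without any powers of `-1`.
-/

section PartialFractions

variable {F ι : Type*} [Field F] [DecidableEq ι] {s : Finset ι} {v : ι → F} {x : F}

theorem eval_div_eval_nodal_eq_sum_of_degree_lt {f : Polynomial F} (hv : Set.InjOn v s)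
    (hf : f.degree < #s) (hx : ∀ i ∈ s, x ≠ v i) :
    f.eval x / (Lagrange.nodal s v).eval x =
      ∑ i ∈ s, f.eval (v i) / (∏ l ∈ s.erase i, (v i - v l)) / (x - v i) := by
  have hinterp : f.eval x = (Lagrange.nodal s v).eval x *
      ∑ i ∈ s, Lagrange.nodalWeight s v i * (x - v i)⁻¹ * f.eval (v i) := by
    rw [← Lagrange.eval_interpolate_not_at_node _ hx, ← Lagrange.eq_interpolate hv hf]
  rw [hinterp, mul_div_cancel_left₀ _ (Lagrange.eval_nodal_not_at_node hx)]
  refine sum_congr rfl fun i _ => ?_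
  rw [Lagrange.nodalWeight, prod_inv_distrib]
  ring

theorem eval_div_eval_nodal_eq_one_add_sum_of_monic {f : Polynomial F} (hv : Set.InjOn v s)
    (hf : f.Monic) (hdeg : f.degree = #s) (hx : ∀ i ∈ s, x ≠ v i) :
    f.eval x / (Lagrange.nodal s v).eval x =
      1 + ∑ i ∈ s, f.eval (v i) / (∏ l ∈ s.erase i, (v i - v l)) / (x - v i) := by
  have hlt : (f - Lagrange.nodal s v).degree < #s := by
    rw [← hdeg]
    exact Polynomial.degree_sub_lt_left (hdeg.trans Lagrange.degree_nodal.symm) hf.ne_zero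
      (hf.leadingCoeff.trans Lagrange.nodal_monic.leadingCoeff.symm)
  have hnode : ∀ i ∈ s, (f - Lagrange.nodal s v).eval (v i) = f.eval (v i) := fun i hi => by
    rw [Polynomial.eval_sub, Lagrange.eval_nodal_at_node hi, sub_zero]
  calc f.eval x / (Lagrange.nodal s v).eval x
      = 1 + (f - Lagrange.nodal s v).eval x / (Lagrange.nodal s v).eval x := by
        rw [Polynomial.eval_sub, sub_div, div_self (Lagrange.eval_nodal_not_at_node hx),
          add_sub_cancel]
    _ = 1 + ∑ i ∈ s, f.eval (v i) / (∏ l ∈ s.erase i, (v i - v l)) / (x - v i) := by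
        rw [eval_div_eval_nodal_eq_sum_of_degree_lt hv hlt hx,
          sum_congr rfl fun i hi => by rw [hnode i hi]]

theorem prod_sub_div_sub_eq_one_add_sum (u : ι → F) (hv : Set.InjOn v s) (hx : ∀ i ∈ s, x ≠ v i) :
    ∏ i ∈ s, (x - u i) / (x - v i) =
      1 + ∑ i ∈ s, (∏ l ∈ s, (v i - u l)) / (∏ l ∈ s.erase i, (v i - v l)) / (x - v i) := by
  simpa only [Lagrange.eval_nodal, prod_div_distrib] using
    eval_div_eval_nodal_eq_one_add_sum_of_monic hv (Lagrange.nodal_monic (v := u))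
      Lagrange.degree_nodal hx

theorem muntz_partial_fraction_identity_general {lam : ι → F} (hlam : Set.InjOn lam s)
    (hx : ∀ j ∈ s, x ≠ -lam j - 1) :
    ∏ j ∈ s, (x - lam j) / (x + lam j + 1) =
      1 - ∑ j ∈ s, (∏ l ∈ s, (lam j + lam l + 1)) / (∏ l ∈ s.erase j, (lam j - lam l)) /
        (x + lam j + 1) := by
  have hy : ∀ j ∈ s, -x - 1 ≠ lam j := fun j hj h => hx j hj (by rw [← h]; ring)
  have hfactor (j : ι) :
      (-x - 1 - (-lam j - 1)) / (-x - 1 - lam j) = (x - lam j) / (x + lam j + 1) := by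
    rw [← neg_div_neg_eq]
    congr 1 <;> ring
  have hpole (j : ι) : -x - 1 - lam j = -(x + lam j + 1) := by ring
  have hresidue (j l : ι) : lam j - (-lam l - 1) = lam j + lam l + 1 := by ring
  have hexpand := prod_sub_div_sub_eq_one_add_sum (fun j => -lam j - 1) hlam hy
  simp only [hfactor, hresidue] at hexpand
  simpa only [hpole, div_neg, sum_neg_distrib, ← sub_eq_add_neg] using hexpand

end PartialFractions

theorem muntz_partial_fraction_identity (n : ℕ) (hn : 1 ≤ n) (lam : ℕ → ℝ)
    (hpos : ∀ j ∈ Finset.Icc 1 n, lam j > -(1/2 : ℝ))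
    (hdist : ∀ j ∈ Finset.Icc 1 n, ∀ k ∈ Finset.Icc 1 n, j ≠ k → lam j ≠ lam k) :
    ∀ x : ℝ, (∀ j ∈ Finset.Icc 1 n, x ≠ -lam j - 1) →
      ∏ j ∈ Finset.Icc 1 n, (x - lam j) / (x + lam j + 1)
        = 1 - ∑ j ∈ Finset.Icc 1 n, muntzA lam n j / (x + lam j + 1) := by
  intro x hx
  exact muntz_partial_fraction_identity_general
    (fun j hj k hk => not_imp_not.1 (hdist j hj k hk)) hx
end

section
/- Let n be a positive integer, let λ_1, …, λ_n be distinct real numbers with λ_j > −1/2, and define K_n(x) = ∑_{j=1}^n a_{j,n} x^{λ_j} for x ∈ (0,1], where a_{j,n} = (∏_{l=1}^n (λ_j + λ_l + 1)) / (∏_{l=1, l≠j}^n (λ_j − λ_l)). Then K_n satisfies the self-reproduction equation K_n(x) = ∫_0^1 K_n(x·v) K_n(v) dv for every x ∈ (0,1]. -/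
open Finset MeasureTheory intervalIntegral

/-- The Müntz polynomial `K_n(x) = ∑_{j=1}^n a_{j,n} x^{λ_j}`. -/
noncomputable def muntzK (lam : ℕ → ℝ) (n : ℕ) (x : ℝ) : ℝ :=
  ∑ j ∈ Finset.Icc 1 n, muntzA lam n j * x ^ lam j

/-!
The integral of `v ^ lam j * K_n(v)` over `(0, 1)` is `∑ k, a_{k,n} / (lam j + lam k + 1)`. The
denominator cancels a factor of `a_{k,n}`, so this sum is the divided difference at the `n` nodes
`lam k` of a monic polynomial of degree `n - 1`, that is, `1`. Hence `∫ (x v) ^ lam j * K_n(v) dv`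
is `x ^ lam j`: integration against `K_n` reproduces every linear combination of the powers
`x ^ lam j`, in particular `K_n` itself.
-/

theorem sum_prod_add_div_prod_sub_div_add_eq_one {ι F : Type*} [Field F] [DecidableEq ι]
    {s : Finset ι} {x y : ι → F} (hx : Set.InjOn x s) {j : ι} (hj : j ∈ s)
    (hne : ∀ k ∈ s, x k + y j ≠ 0) :
    ∑ k ∈ s, (∏ l ∈ s, (x k + y l)) / (∏ l ∈ s.erase k, (x k - x l)) / (x k + y j) = 1 := by
  let P : Polynomial F := Lagrange.nodal (s.erase j) (-y)
  have hdeg : (#s : WithBot ℕ) = P.degree + 1 := by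
    rw [Lagrange.degree_nodal]
    exact_mod_cast (Finset.card_erase_add_one hj).symm
  have hP : ∀ k, P.eval (x k) = ∏ l ∈ s.erase j, (x k + y l) := fun k => by
    simp only [P, Lagrange.eval_nodal, Pi.neg_apply, sub_neg_eq_add]
  calc ∑ k ∈ s, (∏ l ∈ s, (x k + y l)) / (∏ l ∈ s.erase k, (x k - x l)) / (x k + y j)
      = ∑ k ∈ s, P.eval (x k) / ∏ l ∈ s.erase k, (x k - x l) :=
        Finset.sum_congr rfl fun k hk => by
          rw [hP, ← Finset.mul_prod_erase s _ hj, div_right_comm, mul_div_cancel_left₀ _ (hne k hk)]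
    _ = P.leadingCoeff := (Lagrange.leadingCoeff_eq_sum hx hdeg).symm
    _ = 1 := Lagrange.nodal_monic.leadingCoeff

section Moments

variable {a b c : ℝ}

theorem eqOn_rpow_add_rpow_mul_rpow (hc : 0 ≤ c) :
    Set.EqOn (fun v : ℝ => v ^ (a + b)) (fun v => v ^ a * v ^ b) (Set.uIoo 0 c) :=
  fun _ hv => Real.rpow_add (Set.uIoo_of_le hc ▸ hv).1 a b

theorem intervalIntegrable_rpow_mul_rpow (hc : 0 ≤ c) (hab : -1 < a + b) :
    IntervalIntegrable (fun v : ℝ => v ^ a * v ^ b) volume 0 c :=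
  (intervalIntegrable_rpow' hab).congr_uIoo (eqOn_rpow_add_rpow_mul_rpow hc)

theorem integral_rpow_mul_rpow (hc : 0 ≤ c) (hab : -1 < a + b) :
    ∫ v in (0 : ℝ)..c, v ^ a * v ^ b = c ^ (a + b + 1) / (a + b + 1) := by
  rw [← integral_congr_uIoo (eqOn_rpow_add_rpow_mul_rpow hc), integral_rpow (.inl hab),
    Real.zero_rpow (by linarith), sub_zero]

variable {ι : Type*} {s : Finset ι} {p : ι → ℝ} (w : ι → ℝ)

theorem intervalIntegrable_rpow_mul_sum_mul_rpow (hc : 0 ≤ c) (hp : ∀ k ∈ s, -1 < a + p k) :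
    IntervalIntegrable (fun v => v ^ a * ∑ k ∈ s, w k * v ^ p k) volume 0 c := by
  simp only [Finset.mul_sum, mul_left_comm _ (w _), ← Finset.sum_fn]
  exact IntervalIntegrable.sum _ fun k hk =>
    (intervalIntegrable_rpow_mul_rpow hc (hp k hk)).const_mul _

theorem integral_rpow_mul_sum_mul_rpow (hc : 0 ≤ c) (hp : ∀ k ∈ s, -1 < a + p k) :
    ∫ v in (0 : ℝ)..c, v ^ a * ∑ k ∈ s, w k * v ^ p k =
      ∑ k ∈ s, w k * (c ^ (a + p k + 1) / (a + p k + 1)) := by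
  simp only [Finset.mul_sum, mul_left_comm _ (w _)]
  rw [integral_finsetSum fun k hk =>
    (intervalIntegrable_rpow_mul_rpow hc (hp k hk)).const_mul _]
  refine Finset.sum_congr rfl fun k hk => ?_
  rw [intervalIntegral.integral_const_mul, integral_rpow_mul_rpow hc (hp k hk)]

end Moments

theorem integral_rpow_mul_muntzK {n : ℕ} {lam : ℕ → ℝ}
    (hinj : Set.InjOn lam (Finset.Icc 1 n)) {j : ℕ} (hj : j ∈ Finset.Icc 1 n)
    (hgt : ∀ k ∈ Finset.Icc 1 n, -1 < lam j + lam k) :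
    ∫ v in (0 : ℝ)..1, v ^ lam j * muntzK lam n v = 1 := by
  have hne : ∀ k ∈ Finset.Icc 1 n, lam k + (lam j + 1) ≠ 0 := fun k hk => by
    linarith [hgt k hk]
  calc ∫ v in (0 : ℝ)..1, v ^ lam j * muntzK lam n v
      = ∑ k ∈ Finset.Icc 1 n, muntzA lam n k * (1 ^ (lam j + lam k + 1) / (lam j + lam k + 1)) :=
        integral_rpow_mul_sum_mul_rpow (muntzA lam n) zero_le_one hgt
    _ = ∑ k ∈ Finset.Icc 1 n, muntzA lam n k / (lam k + (lam j + 1)) := by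
        simp only [Real.one_rpow, mul_one_div, add_left_comm, add_assoc]
    _ = 1 := by
        simpa only [muntzA, add_assoc] using
          sum_prod_add_div_prod_sub_div_add_eq_one (y := fun l => lam l + 1) hinj hj hne

/-- At `x = 0`, a negative exponent gives the junk value `0 ^ lam j = 0` on both sides. -/
theorem muntzK_self_reproduction_general {n : ℕ} {lam : ℕ → ℝ}
    (hpos : ∀ j ∈ Finset.Icc 1 n, -(1 / 2 : ℝ) < lam j)
    (hinj : Set.InjOn lam (Finset.Icc 1 n)) (c : ℕ → ℝ) {x : ℝ} (hx : 0 ≤ x) :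
    ∑ j ∈ Finset.Icc 1 n, c j * x ^ lam j =
      ∫ v in (0 : ℝ)..1, (∑ j ∈ Finset.Icc 1 n, c j * (x * v) ^ lam j) * muntzK lam n v := by
  have hgt : ∀ j ∈ Finset.Icc 1 n, ∀ k ∈ Finset.Icc 1 n, -1 < lam j + lam k :=
    fun j hj k hk => by linarith [hpos j hj, hpos k hk]
  have hint : ∀ j ∈ Finset.Icc 1 n, IntervalIntegrable
      (fun v => c j * x ^ lam j * (v ^ lam j * muntzK lam n v)) volume 0 1 := fun j hj =>
    (intervalIntegrable_rpow_mul_sum_mul_rpow _ zero_le_one (hgt j hj)).const_mul _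
  symm
  calc ∫ v in (0 : ℝ)..1, (∑ j ∈ Finset.Icc 1 n, c j * (x * v) ^ lam j) * muntzK lam n v
      = ∫ v in (0 : ℝ)..1,
          ∑ j ∈ Finset.Icc 1 n, c j * x ^ lam j * (v ^ lam j * muntzK lam n v) :=
        integral_congr fun v hv => by
          have hv0 : 0 ≤ v := (Set.uIcc_of_le (zero_le_one' ℝ) ▸ hv).1
          simp only [Finset.sum_mul, Real.mul_rpow hx hv0, mul_assoc]
    _ = ∑ j ∈ Finset.Icc 1 n,
          c j * x ^ lam j * ∫ v in (0 : ℝ)..1, v ^ lam j * muntzK lam n v := by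
        simp only [integral_finsetSum hint, intervalIntegral.integral_const_mul]
    _ = ∑ j ∈ Finset.Icc 1 n, c j * x ^ lam j := Finset.sum_congr rfl fun j hj => by
        rw [integral_rpow_mul_muntzK hinj hj (hgt j hj), mul_one]

theorem muntzK_self_reproduction (n : ℕ) (hn : 1 ≤ n) (lam : ℕ → ℝ)
    (hpos : ∀ j ∈ Finset.Icc 1 n, lam j > -(1/2 : ℝ))
    (hdist : ∀ j ∈ Finset.Icc 1 n, ∀ k ∈ Finset.Icc 1 n, j ≠ k → lam j ≠ lam k) :
    ∀ x ∈ Set.Ioc (0:ℝ) 1,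
      muntzK lam n x = ∫ v in (0:ℝ)..1, muntzK lam n (x * v) * muntzK lam n v :=
  have hinj : Set.InjOn lam (Finset.Icc 1 n) := fun j hj k hk => not_imp_not.1 (hdist j hj k hk)
  fun _ hx => muntzK_self_reproduction_general hpos hinj (muntzA lam n) hx.1.le
end

section
/- Let n be a positive integer, let λ_1, …, λ_n be distinct real numbers with λ_j > −1/2, and define K_n(x) = ∑_{j=1}^n a_{j,n} x^{λ_j} for x ∈ (0,1], where a_{j,n} = (∏_{l=1}^n (λ_j + λ_l + 1)) / (∏_{l=1, l≠j}^n (λ_j − λ_l)). Then ∫_0^1 K_n(v)^2 dv = K_n(1) = ∑_{j=1}^n a_{j,n}. -/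
open Finset MeasureTheory intervalIntegral

/-!
`K_n` is the reproducing kernel for evaluation at `1` on the span of the `x ^ λ_k` in `L²(0, 1)`.
Indeed `∫₀¹ K_n(x) x ^ λ_k dx = ∑_j a_j / (λ_j + λ_k + 1)`; the denominator cancels one factor of
`a_j`, and what remains is the Lagrange formula for the leading coefficient of the monic polynomial
`∏_{l ≠ k} (X + λ_l + 1)` of degree `n - 1` at the nodes `λ_j`. So the sum is `1`, the value of
`x ^ λ_k` at `1`. Applying this to `K_n` itself gives `∫₀¹ K_n² = K_n(1)`.
-/

theorem sum_prod_sub_div_prod_erase_sub {ι κ F : Type*} [DecidableEq ι] [Field F]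
    {s : Finset ι} {t : Finset κ} {v : ι → F} (w : κ → F) (hv : Set.InjOn v s)
    (hcard : #s = #t + 1) :
    ∑ i ∈ s, (∏ l ∈ t, (v i - w l)) / ∏ l ∈ s.erase i, (v i - v l) = 1 := by
  have hdeg : (#s : WithBot ℕ) = (Lagrange.nodal t w).degree + 1 := by
    rw [Lagrange.degree_nodal, hcard, Nat.cast_add_one]
  simpa only [Lagrange.eval_nodal, Lagrange.nodal_monic.leadingCoeff] using
    (Lagrange.leadingCoeff_eq_sum hv hdeg).symm

theorem sum_muntzA_div {n k : ℕ} {lam : ℕ → ℝ} (hinj : Set.InjOn lam (Finset.Icc 1 n))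
    (hk : k ∈ Finset.Icc 1 n) (hne : ∀ j ∈ Finset.Icc 1 n, lam j + lam k + 1 ≠ 0) :
    ∑ j ∈ Finset.Icc 1 n, muntzA lam n j / (lam j + lam k + 1) = 1 := by
  have hcancel : ∀ j ∈ Finset.Icc 1 n, muntzA lam n j / (lam j + lam k + 1) =
      (∏ l ∈ (Finset.Icc 1 n).erase k, (lam j - -(lam l + 1))) /
        ∏ l ∈ (Finset.Icc 1 n).erase j, (lam j - lam l) := fun j hj => by
    rw [muntzA, ← mul_prod_erase _ _ hk, div_right_comm, mul_div_cancel_left₀ _ (hne j hj)]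
    simp only [sub_neg_eq_add, add_assoc]
  rw [sum_congr rfl hcancel]
  exact sum_prod_sub_div_prod_erase_sub _ hinj (card_erase_add_one hk).symm

section Integrals

variable {a b : ℝ}

theorem eqOn_uIoc_rpow_add (ha : 0 ≤ a) (hb : 0 ≤ b) (r s : ℝ) :
    Set.EqOn (fun x : ℝ => x ^ (r + s)) (fun x => x ^ r * x ^ s) (Set.uIoc a b) :=
  fun _ hx => Real.rpow_add ((le_min ha hb).trans_lt hx.1) r s

theorem intervalIntegrable_rpow_mul_rpow_s4 (ha : 0 ≤ a) (hb : 0 ≤ b) {r s : ℝ} (h : -1 < r + s) :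
    IntervalIntegrable (fun x : ℝ => x ^ r * x ^ s) volume a b :=
  (intervalIntegrable_rpow' h).congr (eqOn_uIoc_rpow_add ha hb r s)

theorem integral_rpow_mul_rpow_s4 (ha : 0 ≤ a) (hb : 0 ≤ b) {r s : ℝ} (h : -1 < r + s) :
    ∫ x in a..b, x ^ r * x ^ s = (b ^ (r + s + 1) - a ^ (r + s + 1)) / (r + s + 1) := by
  rw [← integral_rpow (Or.inl h)]
  exact integral_congr_ae (.of_forall fun _ hx => (eqOn_uIoc_rpow_add ha hb r s hx).symm)

variable {ι : Type*} {S : Finset ι} {lam : ι → ℝ} {r : ℝ}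

theorem intervalIntegrable_sum_rpow_mul_rpow (ha : 0 ≤ a) (hb : 0 ≤ b) (c : ι → ℝ)
    (h : ∀ j ∈ S, -1 < lam j + r) :
    IntervalIntegrable (fun x : ℝ => (∑ j ∈ S, c j * x ^ lam j) * x ^ r) volume a b := by
  simpa only [sum_mul, mul_assoc, sum_fn] using IntervalIntegrable.sum S fun j hj =>
    (intervalIntegrable_rpow_mul_rpow_s4 ha hb (h j hj)).const_mul (c j)

theorem integral_sum_rpow_mul_rpow (c : ι → ℝ) (h : ∀ j ∈ S, -1 < lam j + r) :
    ∫ x in (0 : ℝ)..1, (∑ j ∈ S, c j * x ^ lam j) * x ^ r = ∑ j ∈ S, c j / (lam j + r + 1) := by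
  simp only [sum_mul, mul_assoc]
  rw [integral_finsetSum fun j hj =>
    (intervalIntegrable_rpow_mul_rpow_s4 le_rfl zero_le_one (h j hj)).const_mul (c j)]
  refine sum_congr rfl fun j hj => ?_
  have hne : lam j + r + 1 ≠ 0 := by linarith [h j hj]
  rw [intervalIntegral.integral_const_mul, integral_rpow_mul_rpow_s4 le_rfl zero_le_one (h j hj),
    Real.one_rpow, Real.zero_rpow hne, sub_zero, mul_one_div]

end Integrals

section MuntzPolynomial

variable {n : ℕ} {lam : ℕ → ℝ}

theorem muntzK_one : muntzK lam n 1 = ∑ j ∈ Finset.Icc 1 n, muntzA lam n j := by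
  simp only [muntzK, Real.one_rpow, mul_one]

theorem integral_muntzK_mul_rpow {k : ℕ} (hinj : Set.InjOn lam (Finset.Icc 1 n))
    (hk : k ∈ Finset.Icc 1 n) (h : ∀ j ∈ Finset.Icc 1 n, -1 < lam j + lam k) :
    ∫ x in (0 : ℝ)..1, muntzK lam n x * x ^ lam k = 1 :=
  (integral_sum_rpow_mul_rpow _ h).trans
    (sum_muntzA_div hinj hk fun j hj => by linarith [h j hj])

theorem integral_muntzK_mul_sum_rpow (hinj : Set.InjOn lam (Finset.Icc 1 n))
    (hpos : ∀ j ∈ Finset.Icc 1 n, lam j > -(1 / 2 : ℝ)) (c : ℕ → ℝ) :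
    ∫ x in (0 : ℝ)..1, muntzK lam n x * ∑ k ∈ Finset.Icc 1 n, c k * x ^ lam k =
      ∑ k ∈ Finset.Icc 1 n, c k := by
  have hexp : ∀ k ∈ Finset.Icc 1 n, ∀ j ∈ Finset.Icc 1 n, -1 < lam j + lam k :=
    fun k hk j hj => by linarith [hpos j hj, hpos k hk]
  have hint : ∀ k ∈ Finset.Icc 1 n,
      IntervalIntegrable (fun x => muntzK lam n x * x ^ lam k) volume 0 1 := fun k hk =>
    intervalIntegrable_sum_rpow_mul_rpow le_rfl zero_le_one _ (hexp k hk)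
  simp only [mul_sum, mul_left_comm _ (c _)]
  rw [integral_finsetSum fun k hk => (hint k hk).const_mul (c k)]
  refine sum_congr rfl fun k hk => ?_
  rw [intervalIntegral.integral_const_mul, integral_muntzK_mul_rpow hinj hk (hexp k hk), mul_one]

end MuntzPolynomial

theorem muntzK_L2_norm (n : ℕ) (hn : 1 ≤ n) (lam : ℕ → ℝ)
    (hpos : ∀ j ∈ Finset.Icc 1 n, lam j > -(1/2 : ℝ))
    (hdist : ∀ j ∈ Finset.Icc 1 n, ∀ k ∈ Finset.Icc 1 n, j ≠ k → lam j ≠ lam k) :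
    (∫ v in (0:ℝ)..1, (muntzK lam n v) ^ 2) = muntzK lam n 1 ∧
      muntzK lam n 1 = ∑ j ∈ Finset.Icc 1 n, muntzA lam n j := by
  have hinj : Set.InjOn lam (Finset.Icc 1 n) := fun j hj k hk =>
    not_imp_not.mp (hdist j hj k hk)
  refine ⟨?_, muntzK_one⟩
  calc ∫ v in (0:ℝ)..1, (muntzK lam n v) ^ 2
      = ∫ v in (0:ℝ)..1, muntzK lam n v * muntzK lam n v := by simp only [sq]
    _ = ∑ j ∈ Finset.Icc 1 n, muntzA lam n j := integral_muntzK_mul_sum_rpow hinj hpos _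
    _ = muntzK lam n 1 := muntzK_one.symm
end

section
/- Let n be a positive integer, let λ_1, …, λ_n be distinct real numbers with λ_j > −1/2, let a_{j,n} = (∏_{l=1}^n (λ_j + λ_l + 1)) / (∏_{l=1, l≠j}^n (λ_j − λ_l)), and fix t > 0. Let M be the n×n real matrix with entries M_{l j} = t^{λ_l + λ_j + 1}/(λ_l + λ_j + 1), and let A be the n×n real matrix with entries A_{l j} = a_{l,n} a_{j,n} t^{−λ_l − λ_j − 1}/(λ_l + λ_j + 1). Then M is invertible and A is its inverse, i.e. M·A = A·M = I. -/
open Finset Matrix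

/-!
Conjugating by the diagonal matrix with entries `t ^ (λ_i + 1/2)` reduces the claim to `t = 1`,
where `M` is the Cauchy matrix `1 / (x_i - y_j)` with `x = λ` and `y = -1 - λ`.
An entry of the product of a Cauchy matrix with its claimed inverse is, up to a factor, the partial
fraction expansion of `∏_{m ≠ j} (X - x_m) / ∏_k (X - y_k)` evaluated at `x_i`. It vanishes for
`i ≠ j` because `x_i` is then a root of the numerator. The reflection `z ↦ -1 - z` exchanges the
two families of nodes, so the inverse is again built from the same matrix.
-/

lemma mul_mul_mul_mul_eq_one {G : Type*} [Monoid G] {b c d d' : G} (hd : d * d' = 1)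
    (hc : c * b = 1) : d * c * d * (d' * b * d') = 1 :=
  calc d * c * d * (d' * b * d') = d * (c * (d * d' * b)) * d' := by simp only [mul_assoc]
    _ = 1 := by rw [hd, one_mul, hc, mul_one, hd]

section Cauchy

variable {ι κ F : Type*} [Field F]

lemma eval_div_eval_nodal_eq_sum [DecidableEq ι] {s : Finset ι} {v : ι → F} (hv : Set.InjOn v s)
    {p : Polynomial F} (hp : p.degree < #s) {z : F} (hz : ∀ i ∈ s, z ≠ v i) :
    p.eval z / (Lagrange.nodal s v).eval z =
      ∑ i ∈ s, Lagrange.nodalWeight s v i * p.eval (v i) / (z - v i) := by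
  have hp_eval := congrArg (Polynomial.eval z) (Lagrange.eq_interpolate hv hp)
  rw [Lagrange.eval_interpolate_not_at_node _ hz] at hp_eval
  rw [div_eq_iff (Lagrange.eval_nodal_not_at_node hz), hp_eval, mul_comm]
  congr 1
  exact sum_congr rfl fun i _ ↦ by ring

/-- The Cauchy matrix with entries `1 / (x i - y j)`. The sign convention is the one for which the
inverse formula `cauchyMatrix_mul_eq_one` carries no sign. -/
def cauchyMatrix (x : ι → F) (y : κ → F) : Matrix ι κ F :=
  of fun i j ↦ (x i - y j)⁻¹

lemma cauchyMatrix_apply (x : ι → F) (y : κ → F) (i : ι) (j : κ) :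
    cauchyMatrix x y i j = (x i - y j)⁻¹ := rfl

lemma cauchyMatrix_const_sub (c : F) (x : ι → F) (y : κ → F) :
    cauchyMatrix (fun i ↦ c - x i) (fun j ↦ c - y j) = -cauchyMatrix x y := by
  ext i j
  rw [Matrix.neg_apply, cauchyMatrix_apply, cauchyMatrix_apply, sub_sub_sub_cancel_left,
    ← inv_neg, neg_sub]

variable [Fintype ι] [DecidableEq ι] {x y : ι → F}

/-- The diagonal scaling factors relating the inverse of the square Cauchy matrix of `x` and `y`
to the Cauchy matrix of `y` and `x`. -/
def cauchyWeight (x y : ι → F) (i : ι) : F :=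
  (∏ k, (x i - y k)) / ∏ k ∈ univ.erase i, (x i - x k)

lemma cauchyWeight_div_sub {i j : ι} (h : x i ≠ y j) :
    cauchyWeight x y i / (x i - y j) =
      Lagrange.nodalWeight univ x i * (Lagrange.nodal (univ.erase j) y).eval (x i) := by
  rw [cauchyWeight, Lagrange.nodalWeight, prod_inv_distrib, Lagrange.eval_nodal,
    ← mul_prod_erase univ (fun k ↦ x i - y k) (mem_univ j)]
  field_simp [sub_ne_zero.2 h]

lemma eval_nodal_erase_div_mul_cauchyWeight (hx : Function.Injective x) {i : ι}
    (hi : ∀ k, x i ≠ y k) (j : ι) :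
    (Lagrange.nodal (univ.erase j) x).eval (x i) / (Lagrange.nodal univ y).eval (x i) *
      cauchyWeight x y j = (1 : Matrix ι ι F) i j := by
  obtain rfl | hij := eq_or_ne i j
  · have hnum : ∏ k ∈ univ.erase i, (x i - x k) ≠ 0 := prod_ne_zero_iff.2 fun k hk ↦
      sub_ne_zero.2 (hx.ne (ne_of_mem_erase hk).symm)
    have hden : ∏ k, (x i - y k) ≠ 0 := prod_ne_zero_iff.2 fun k _ ↦ sub_ne_zero.2 (hi k)
    rw [Lagrange.eval_nodal, Lagrange.eval_nodal, cauchyWeight, one_apply_eq,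
      div_mul_div_cancel₀ hden, div_self hnum]
  · rw [Lagrange.eval_nodal_at_node (mem_erase.2 ⟨hij, mem_univ i⟩), zero_div, zero_mul,
      one_apply_ne hij]

theorem cauchyMatrix_mul_eq_one (hx : Function.Injective x) (hy : Function.Injective y)
    (hxy : ∀ i j, x i ≠ y j) :
    cauchyMatrix x y *
      (diagonal (cauchyWeight y x) * cauchyMatrix y x * diagonal (cauchyWeight x y)) = 1 := by
  ext i j
  have hdeg : (Lagrange.nodal (univ.erase j) x).degree < #(univ : Finset ι) := by
    rw [Lagrange.degree_nodal]
    exact_mod_cast card_erase_lt_of_mem (mem_univ j)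
  rw [← eval_nodal_erase_div_mul_cauchyWeight hx (hxy i),
    eval_div_eval_nodal_eq_sum hy.injOn hdeg fun k _ ↦ hxy i k,
    mul_apply, sum_mul]
  refine sum_congr rfl fun k _ ↦ ?_
  rw [← cauchyWeight_div_sub (hxy j k).symm, mul_diagonal, diagonal_mul, cauchyMatrix_apply,
    cauchyMatrix_apply]
  ring

lemma cauchyWeight_const_sub (c : F) (x y : ι → F) :
    cauchyWeight (fun i ↦ c - x i) (fun j ↦ c - y j) = -cauchyWeight x y := by
  ext i
  have hneg (s : Finset ι) (z : ι → F) :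
      ∏ k ∈ s, (z k - x i) = (-1) ^ #s * ∏ k ∈ s, (x i - z k) := by
    rw [← prod_neg]
    simp only [neg_sub]
  simp only [cauchyWeight, sub_sub_sub_cancel_left, Pi.neg_apply]
  rw [hneg, hneg, ← card_erase_add_one (mem_univ i), pow_succ, mul_assoc,
    mul_div_mul_left _ _ (pow_ne_zero _ (neg_ne_zero.2 one_ne_zero)), neg_one_mul, neg_div]

theorem cauchyMatrix_self_const_sub_mul_eq_one {c : F} (hx : Function.Injective x)
    (hc : ∀ i j, x i + x j ≠ c) :
    cauchyMatrix x (fun j ↦ c - x j) *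
      (diagonal (cauchyWeight x fun j ↦ c - x j) * cauchyMatrix x (fun j ↦ c - x j) *
        diagonal (cauchyWeight x fun j ↦ c - x j)) = 1 := by
  have hM := cauchyMatrix_const_sub c x fun j ↦ c - x j
  have hw := cauchyWeight_const_sub c x fun j ↦ c - x j
  simp only [sub_sub_cancel] at hM hw
  have hinv := cauchyMatrix_mul_eq_one hx (y := fun j ↦ c - x j)
    (fun i j h ↦ hx (sub_right_injective h)) fun i j h ↦ hc i j (eq_sub_iff_add_eq.1 h)
  rwa [hM, hw, Pi.neg_def, ← diagonal_neg, neg_mul_neg] at hinv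

end Cauchy

theorem muntz_covariance_inverse_general {ι : Type*} [Fintype ι] [DecidableEq ι] {lam a : ι → ℝ}
    (hinj : Function.Injective lam) (hne : ∀ i j, lam i + lam j + 1 ≠ 0)
    (ha : ∀ j, a j = (∏ l, (lam j + lam l + 1)) / ∏ l ∈ univ.erase j, (lam j - lam l))
    {t : ℝ} (ht : 0 < t) {M A : Matrix ι ι ℝ}
    (hM : ∀ l j, M l j = t ^ (lam l + lam j + 1) / (lam l + lam j + 1))
    (hA : ∀ l j, A l j = a l * a j * t ^ (-lam l - lam j - 1) / (lam l + lam j + 1)) :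
    IsUnit M ∧ M * A = 1 ∧ A * M = 1 := by
  set C := cauchyMatrix lam fun j ↦ -1 - lam j with hC
  set D := diagonal fun i ↦ t ^ (lam i + 1 / 2) with hD
  set D' := diagonal fun i ↦ t ^ (-(lam i + 1 / 2)) with hD'
  have hsub (l j : ι) : lam l - (-1 - lam j) = lam l + lam j + 1 := by ring
  have hweight : cauchyWeight lam (fun j ↦ -1 - lam j) = a := by
    ext j
    simp only [cauchyWeight, hsub, ha]
  have hCinv : C * (diagonal a * C * diagonal a) = 1 := hweight ▸
    cauchyMatrix_self_const_sub_mul_eq_one hinj fun i j h ↦ hne i j (by linarith)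
  have hDD' : D * D' = 1 := by
    simp only [hD, hD', diagonal_mul_diagonal, ← Real.rpow_add ht, add_neg_cancel,
      Real.rpow_zero, diagonal_one]
  have hM_conj : M = D * C * D := by
    ext l j
    rw [hM, mul_diagonal, diagonal_mul, hC, cauchyMatrix_apply, hsub, mul_right_comm,
      ← Real.rpow_add ht, div_eq_mul_inv]
    ring_nf
  have hA_conj : A = D' * (diagonal a * C * diagonal a) * D' := by
    ext l j
    have hpow : t ^ (-lam l - lam j - 1) = t ^ (-(lam l + 1 / 2)) * t ^ (-(lam j + 1 / 2)) := by
      rw [← Real.rpow_add ht]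
      ring_nf
    rw [hA, mul_diagonal, diagonal_mul, mul_diagonal, diagonal_mul, hC, cauchyMatrix_apply,
      hsub, hpow]
    ring
  have hMA : M * A = 1 := by
    rw [hM_conj, hA_conj, mul_mul_mul_mul_eq_one hDD' hCinv]
  exact ⟨.of_mul_eq_one A hMA, hMA, mul_eq_one_comm.1 hMA⟩

lemma muntzA_add_one (lam : ℕ → ℝ) {n : ℕ} (j : Fin n) :
    muntzA lam n (j + 1) = (∏ l : Fin n, (lam (j + 1) + lam (l + 1) + 1)) /
      ∏ l ∈ univ.erase j, (lam (j + 1) - lam (l + 1)) := by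
  let e : Fin n ↪ ℕ := Fin.valEmbedding.trans (addRightEmbedding 1)
  have hIcc : Icc 1 n = univ.map e := by
    rw [← Finset.map_map, Fin.map_valEmbedding_univ, Nat.Iio_eq_range, range_eq_Ico,
      map_add_right_Ico]
    rfl
  rw [muntzA, hIcc, show (j + 1 : ℕ) = e j from rfl, ← map_erase, prod_map, prod_map]
  rfl

theorem muntz_covariance_inverse (n : ℕ) (hn : 1 ≤ n) (lam : ℕ → ℝ)
    (hpos : ∀ j ∈ Finset.Icc 1 n, lam j > -(1/2 : ℝ))
    (hdist : ∀ j ∈ Finset.Icc 1 n, ∀ k ∈ Finset.Icc 1 n, j ≠ k → lam j ≠ lam k)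
    (t : ℝ) (ht : 0 < t)
    (M A : Matrix (Fin n) (Fin n) ℝ)
    (hM : ∀ l j : Fin n, M l j =
      t ^ (lam (l.1 + 1) + lam (j.1 + 1) + 1) / (lam (l.1 + 1) + lam (j.1 + 1) + 1))
    (hA : ∀ l j : Fin n, A l j =
      muntzA lam n (l.1 + 1) * muntzA lam n (j.1 + 1) *
        t ^ (-(lam (l.1 + 1)) - lam (j.1 + 1) - 1) / (lam (l.1 + 1) + lam (j.1 + 1) + 1)) :
    IsUnit M ∧ M * A = 1 ∧ A * M = 1 := by
  have hmem (i : Fin n) : i.1 + 1 ∈ Icc 1 n := mem_Icc.2 ⟨Nat.le_add_left 1 i, i.2⟩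
  refine muntz_covariance_inverse_general (lam := fun i : Fin n ↦ lam (i + 1))
    (fun i j h ↦ ?_) (fun i j ↦ ?_) (muntzA_add_one lam) ht hM hA
  · by_contra hij
    exact hdist _ (hmem i) _ (hmem j) (by simpa [Fin.val_inj] using hij) h
  · linarith [hpos _ (hmem i), hpos _ (hmem j)]
end

section
/- Let λ_1, λ_2, … be distinct real numbers with λ_j > −1/2. For n ≥ 1 define K_n(x) = ∑_{j=1}^n a_{j,n} x^{λ_j} on (0,1], where a_{j,n} = (∏_{l=1}^n (λ_j + λ_l + 1)) / (∏_{l=1, l≠j}^n (λ_j − λ_l)), and define the Müntz–Legendre polynomials by L_1(x) = x^{λ_1} and, for k ≥ 2, L_k(x) = ∑_{j=1}^k c_{j,k} x^{λ_j} with c_{j,k} = (∏_{l=1}^{k−1} (λ_l + λ_j + 1)) / (∏_{l=1, l≠j}^k (λ_j − λ_l)). Then for every n ≥ 1 and every x ∈ (0,1] one has K_n(x) = ∑_{j=1}^n (1 + 2λ_j) L_j(x); in particular K_n(1) = ∑_{j=1}^n (1 + 2λ_j). -/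
open Finset

/-- The coefficients `c_{j,k}` of the Müntz–Legendre polynomial `L_k`.
For `k = 1` both products are empty, so `c_{1,1} = 1` and `L_1(x) = x^{λ_1}`. -/
noncomputable def muntzC (lam : ℕ → ℝ) (j k : ℕ) : ℝ :=
  (∏ l ∈ Finset.Icc 1 (k - 1), (lam l + lam j + 1)) /
    (∏ l ∈ (Finset.Icc 1 k).erase j, (lam j - lam l))

/-- The Müntz–Legendre polynomial `L_k(x) = ∑_{j=1}^k c_{j,k} x^{λ_j}`. -/
noncomputable def muntzL (lam : ℕ → ℝ) (k : ℕ) (x : ℝ) : ℝ :=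
  ∑ j ∈ Finset.Icc 1 k, muntzC lam j k * x ^ lam j

/-! Both `K_n` and `L_k` are divided differences at the nodes `λ_1, λ_2, …`: `K_n` of
`t ↦ ω_n(t) x ^ t` at `λ_1, …, λ_n`, where `ω_n(t) = ∏_{l ≤ n} (t + λ_l + 1)`, and `L_k` of
`t ↦ ω_{k-1}(t) x ^ t` at `λ_1, …, λ_k`. Write the last factor of `ω_{n+1}` as
`t + λ_{n+1} + 1 = (t - λ_{n+1}) + (1 + 2 λ_{n+1})`. The first summand cancels the node `λ_{n+1}`
and yields `K_n`, the second yields `(1 + 2 λ_{n+1}) L_{n+1}`, and the recursion telescopes.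
Finally `L_k(1)` is the divided difference at `k` nodes of the monic polynomial `ω_{k-1}` of degree
`k - 1`, hence `1`. -/

section DividedDifference

variable {ι F : Type*} [DecidableEq ι] [Field F] {s : Finset ι} {v : ι → F} {i : ι}

/-- The divided difference at the nodes `v i`, `i ∈ s`, in its Lagrange form. The function enters
through its values `g i` at the nodes `v i`; it is meaningful for `v` injective on `s`. -/
def dividedDiff (s : Finset ι) (v g : ι → F) : F :=
  ∑ i ∈ s, g i / ∏ j ∈ s.erase i, (v i - v j)

theorem dividedDiff_add (s : Finset ι) (v g h : ι → F) :
    dividedDiff s v (fun i => g i + h i) = dividedDiff s v g + dividedDiff s v h := by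
  simp only [dividedDiff, add_div, sum_add_distrib]

theorem dividedDiff_const_mul (s : Finset ι) (v g : ι → F) (c : F) :
    dividedDiff s v (fun i => c * g i) = c * dividedDiff s v g := by
  simp only [dividedDiff, mul_div_assoc, mul_sum]

theorem dividedDiff_insert_sub_mul (hi : i ∉ s) (hv : ∀ j ∈ s, v j ≠ v i) (g : ι → F) :
    dividedDiff (insert i s) v (fun j => (v j - v i) * g j) = dividedDiff s v g := by
  rw [dividedDiff, sum_insert hi, sub_self, zero_mul, zero_div, zero_add]
  refine sum_congr rfl fun j hj => ?_
  have hij : i ≠ j := fun h => hi (h ▸ hj)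
  have hi' : i ∉ s.erase j := fun h => hi (mem_of_mem_erase h)
  rw [erase_insert_of_ne hij, prod_insert hi', mul_div_mul_left _ _ (sub_ne_zero.2 (hv j hj))]

theorem dividedDiff_prod_sub_eq_one {κ : Type*} {t : Finset κ} (hv : Set.InjOn v s)
    (hcard : #s = #t + 1) (w : κ → F) :
    dividedDiff s v (fun i => ∏ l ∈ t, (v i - w l)) = 1 := by
  have hdegree : (#s : WithBot ℕ) = (Lagrange.nodal t w).degree + 1 := by
    rw [Lagrange.degree_nodal, hcard, Nat.cast_succ]
  have hlead := Lagrange.leadingCoeff_eq_sum hv hdegree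
  rw [Lagrange.nodal_monic.leadingCoeff] at hlead
  simpa only [dividedDiff, Lagrange.eval_nodal] using hlead.symm

end DividedDifference

theorem muntzK_eq_dividedDiff (lam : ℕ → ℝ) (n : ℕ) (x : ℝ) :
    muntzK lam n x = dividedDiff (Icc 1 n) lam
      (fun j => (∏ l ∈ Icc 1 n, (lam j + lam l + 1)) * x ^ lam j) := by
  simp only [muntzK, muntzA, dividedDiff, div_mul_eq_mul_div]

theorem muntzL_eq_dividedDiff (lam : ℕ → ℝ) (k : ℕ) (x : ℝ) :
    muntzL lam k x = dividedDiff (Icc 1 k) lam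
      (fun j => (∏ l ∈ Icc 1 (k - 1), (lam j + lam l + 1)) * x ^ lam j) := by
  simp only [muntzL, muntzC, dividedDiff, div_mul_eq_mul_div, add_comm (lam _) (lam _)]

theorem muntzK_succ {lam : ℕ → ℝ} {n : ℕ} (hne : ∀ j ∈ Icc 1 n, lam j ≠ lam (n + 1)) (x : ℝ) :
    muntzK lam (n + 1) x = muntzK lam n x + (1 + 2 * lam (n + 1)) * muntzL lam (n + 1) x := by
  set g : ℕ → ℝ := fun j => (∏ l ∈ Icc 1 n, (lam j + lam l + 1)) * x ^ lam j with hg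
  have hsplit (j : ℕ) : (∏ l ∈ Icc 1 (n + 1), (lam j + lam l + 1)) * x ^ lam j =
      (lam j - lam (n + 1)) * g j + (1 + 2 * lam (n + 1)) * g j := by
    rw [prod_Icc_succ_top (Nat.le_add_left 1 n), hg]
    ring
  have hIcc : Icc 1 (n + 1) = insert (n + 1) (Icc 1 n) :=
    (insert_Icc_right_eq_Icc_add_one (Nat.le_add_left 1 n)).symm
  have hcancel : dividedDiff (Icc 1 (n + 1)) lam (fun j => (lam j - lam (n + 1)) * g j) =
      muntzK lam n x := by
    rw [hIcc, dividedDiff_insert_sub_mul (by simp) hne, muntzK_eq_dividedDiff]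
  rw [muntzK_eq_dividedDiff, muntzL_eq_dividedDiff, Nat.add_sub_cancel]
  simp only [hsplit]
  rw [dividedDiff_add, dividedDiff_const_mul, hcancel]

theorem muntzK_eq_sum_muntzL {lam : ℕ → ℝ} {n : ℕ} (hinj : Set.InjOn lam (Icc 1 n)) (x : ℝ) :
    muntzK lam n x = ∑ j ∈ Icc 1 n, (1 + 2 * lam j) * muntzL lam j x := by
  induction n with
  | zero => simp [muntzK]
  | succ n ih =>
    have hsub : Icc 1 n ⊆ Icc 1 (n + 1) := Icc_subset_Icc_right n.le_succ
    have hne : ∀ j ∈ Icc 1 n, lam j ≠ lam (n + 1) := fun j hj =>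
      hinj.ne (hsub hj) (by simp) (Nat.lt_succ_of_le (mem_Icc.1 hj).2).ne
    rw [muntzK_succ hne, ih (hinj.mono (coe_subset.2 hsub)),
      sum_Icc_succ_top (Nat.le_add_left 1 n)]

theorem muntzL_one {lam : ℕ → ℝ} {k : ℕ} (hk : 1 ≤ k) (hinj : Set.InjOn lam (Icc 1 k)) :
    muntzL lam k 1 = 1 := by
  have hcard : #(Icc 1 k) = #(Icc 1 (k - 1)) + 1 := by simp [Nat.sub_add_cancel hk]
  simpa only [muntzL_eq_dividedDiff, Real.one_rpow, mul_one, sub_neg_eq_add, add_assoc] using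
    dividedDiff_prod_sub_eq_one hinj hcard (fun l => -(lam l + 1))

theorem muntzK_eq_sum_muntzLegendre_general {lam : ℕ → ℝ} {n : ℕ}
    (hinj : Set.InjOn lam (Icc 1 n)) :
    (∀ x ∈ Set.Ioi (0 : ℝ),
      muntzK lam n x = ∑ j ∈ Icc 1 n, (1 + 2 * lam j) * muntzL lam j x) ∧
    muntzK lam n 1 = ∑ j ∈ Icc 1 n, (1 + 2 * lam j) := by
  refine ⟨fun x _ => muntzK_eq_sum_muntzL hinj x, ?_⟩
  rw [muntzK_eq_sum_muntzL hinj]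
  refine sum_congr rfl fun j hj => ?_
  obtain ⟨one_le, le_n⟩ := mem_Icc.1 hj
  rw [muntzL_one one_le (hinj.mono (coe_subset.2 (Icc_subset_Icc_right le_n))), mul_one]

theorem muntzK_eq_sum_muntzLegendre (lam : ℕ → ℝ)
    (hpos : ∀ j, 1 ≤ j → lam j > -(1/2 : ℝ))
    (hdist : ∀ j k, 1 ≤ j → 1 ≤ k → j ≠ k → lam j ≠ lam k) :
    ∀ n, 1 ≤ n →
      (∀ x ∈ Set.Ioc (0:ℝ) 1,
        muntzK lam n x = ∑ j ∈ Finset.Icc 1 n, (1 + 2 * lam j) * muntzL lam j x) ∧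
      muntzK lam n 1 = ∑ j ∈ Finset.Icc 1 n, (1 + 2 * lam j) := by
  intro n _
  have hinj : Set.InjOn lam (Icc 1 n) := fun j hj k hk => not_imp_not.1
    (hdist j k (mem_Icc.1 hj).1 (mem_Icc.1 hk).1)
  exact (muntzK_eq_sum_muntzLegendre_general hinj).imp_left fun h x hx => h x hx.1
end

section
/- Let λ_1, λ_2, … be distinct real numbers with λ_j > −1/2, let K_n(x) = ∑_{j=1}^n a_{j,n} x^{λ_j} with a_{j,n} = (∏_{l=1}^n (λ_j + λ_l + 1)) / (∏_{l=1, l≠j}^n (λ_j − λ_l)), and let L_n(x) = ∑_{j=1}^n c_{j,n} x^{λ_j} be the n-th Müntz–Legendre polynomial, with L_1(x) = x^{λ_1} and c_{j,n} = (∏_{l=1}^{n−1} (λ_l + λ_j + 1)) / (∏_{l=1, l≠j}^n (λ_j − λ_l)) for n ≥ 2. Then for every x > 0 one has L_n(x) = x^{−λ_n − 1} ∫_0^x s^{λ_n} K_n(s) ds. -/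
open Finset

/-!
The coefficients satisfy `a_{j,n} = c_{j,n} (λ_n + λ_j + 1)`, so `x ^ λ_n * K_n(x)` is the
derivative of `x ^ (λ_n + 1) * L_n(x)`. Since `λ_n + λ_j > -1`, the latter function tends to zero
at the origin and the former is integrable there.
-/

section Integral

variable {μ x : ℝ}

theorem eqOn_rpow_add_rpow_mul_rpow_s9 (hx : 0 ≤ x) (ν : ℝ) :
    Set.EqOn (fun s : ℝ => s ^ (μ + ν)) (fun s => s ^ μ * s ^ ν) (Set.uIoc 0 x) := by
  rw [Set.uIoc_of_le hx]
  exact fun s hs => Real.rpow_add hs.1 μ ν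

theorem intervalIntegrable_rpow_mul_rpow_s9 {ν : ℝ} (hx : 0 ≤ x) (hμν : -1 < μ + ν) :
    IntervalIntegrable (fun s : ℝ => s ^ μ * s ^ ν) MeasureTheory.volume 0 x :=
  (intervalIntegral.intervalIntegrable_rpow' hμν).congr (eqOn_rpow_add_rpow_mul_rpow_s9 hx ν)

theorem integral_rpow_mul_rpow_s9 {ν : ℝ} (hx : 0 ≤ x) (hμν : -1 < μ + ν) :
    ∫ s in (0 : ℝ)..x, s ^ μ * s ^ ν = x ^ (μ + ν + 1) / (μ + ν + 1) := by
  have hne : μ + ν + 1 ≠ 0 := by linarith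
  calc ∫ s in (0 : ℝ)..x, s ^ μ * s ^ ν
      = ∫ s in (0 : ℝ)..x, s ^ (μ + ν) :=
        (intervalIntegral.integral_congr_ae (.of_forall (eqOn_rpow_add_rpow_mul_rpow_s9 hx ν))).symm
    _ = x ^ (μ + ν + 1) / (μ + ν + 1) := by
        rw [integral_rpow (Or.inl hμν), Real.zero_rpow hne, sub_zero]

theorem integral_rpow_mul_sum_rpow {ι : Type*} (t : Finset ι) (c ν : ι → ℝ) (hx : 0 < x)
    (hμν : ∀ j ∈ t, -1 < μ + ν j) :
    ∫ s in (0 : ℝ)..x, s ^ μ * ∑ j ∈ t, c j * (μ + ν j + 1) * s ^ ν j =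
      x ^ (μ + 1) * ∑ j ∈ t, c j * x ^ ν j := by
  calc ∫ s in (0 : ℝ)..x, s ^ μ * ∑ j ∈ t, c j * (μ + ν j + 1) * s ^ ν j
      = ∫ s in (0 : ℝ)..x, ∑ j ∈ t, c j * (μ + ν j + 1) * (s ^ μ * s ^ ν j) := by
        simp only [mul_sum, mul_left_comm]
    _ = ∑ j ∈ t, c j * (μ + ν j + 1) * ∫ s in (0 : ℝ)..x, s ^ μ * s ^ ν j := by
        rw [intervalIntegral.integral_finsetSum fun j hj =>
          (intervalIntegrable_rpow_mul_rpow_s9 hx.le (hμν j hj)).const_mul _]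
        simp only [intervalIntegral.integral_const_mul]
    _ = ∑ j ∈ t, c j * x ^ (μ + ν j + 1) := by
        refine sum_congr rfl fun j hj => ?_
        have hne : μ + ν j + 1 ≠ 0 := by linarith [hμν j hj]
        rw [integral_rpow_mul_rpow_s9 hx.le (hμν j hj), mul_assoc, mul_div_cancel₀ _ hne]
    _ = x ^ (μ + 1) * ∑ j ∈ t, c j * x ^ ν j := by
        rw [mul_sum]
        refine sum_congr rfl fun j _ => ?_
        rw [add_right_comm, Real.rpow_add hx, mul_left_comm]

end Integral

theorem muntzA_eq_muntzC_mul (lam : ℕ → ℝ) {n : ℕ} (hn : 1 ≤ n) (j : ℕ) :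
    muntzA lam n j = muntzC lam j n * (lam n + lam j + 1) := by
  obtain ⟨m, rfl⟩ := Nat.exists_eq_add_of_le' hn
  simp only [muntzA, muntzC, Nat.add_sub_cancel, add_comm (lam j)]
  rw [prod_Icc_succ_top hn, div_mul_eq_mul_div]

theorem muntzK_eq_sum_muntzC (lam : ℕ → ℝ) (n : ℕ) (x : ℝ) :
    muntzK lam n x = ∑ j ∈ Icc 1 n, muntzC lam j n * (lam n + lam j + 1) * x ^ lam j := by
  refine sum_congr rfl fun j hj => ?_
  obtain ⟨hj₁, hjn⟩ := mem_Icc.mp hj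
  rw [muntzA_eq_muntzC_mul lam (hj₁.trans hjn)]

theorem muntzL_eq_integral_muntzK_general (lam : ℕ → ℝ) (n : ℕ)
    (hsum : ∀ j ∈ Icc 1 n, -1 < lam n + lam j)
    (_hdist : Set.InjOn lam (Icc 1 n)) {x : ℝ} (hx : 0 < x) :
    muntzL lam n x =
      x ^ (-(lam n) - 1) * ∫ s in (0 : ℝ)..x, s ^ lam n * muntzK lam n s := by
  have hpow : x ^ (-(lam n) - 1) * x ^ (lam n + 1) = 1 := by
    rw [← Real.rpow_add hx, show -(lam n) - 1 + (lam n + 1) = 0 by ring, Real.rpow_zero]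
  simp only [muntzK_eq_sum_muntzC]
  rw [integral_rpow_mul_sum_rpow _ _ _ hx hsum, ← mul_assoc, hpow, one_mul, muntzL]

theorem muntzL_eq_integral_muntzK (lam : ℕ → ℝ)
    (hpos : ∀ j, 1 ≤ j → lam j > -(1/2 : ℝ))
    (hdist : ∀ j k, 1 ≤ j → 1 ≤ k → j ≠ k → lam j ≠ lam k)
    (n : ℕ) (hn : 1 ≤ n) :
    ∀ x : ℝ, 0 < x →
      muntzL lam n x =
        x ^ (-(lam n) - 1) * ∫ s in (0:ℝ)..x, s ^ lam n * muntzK lam n s := by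
  have hsum j (hj : j ∈ Icc 1 n) : -1 < lam n + lam j := by
    linarith [hpos n hn, hpos j (mem_Icc.mp hj).1]
  exact fun x => muntzL_eq_integral_muntzK_general lam n hsum fun j hj k hk =>
    not_imp_not.mp (hdist j k (mem_Icc.mp hj).1 (mem_Icc.mp hk).1)
end

section
/- Let λ_1, λ_2, … be distinct real numbers with λ_j > −1/2, and define K_n(x) = ∑_{j=1}^n a_{j,n} x^{λ_j} for x > 0, where a_{j,n} = (∏_{l=1}^n (λ_j + λ_l + 1)) / (∏_{l=1, l≠j}^n (λ_j − λ_l)), with convention K_0 ≡ 0. Then for every n ≥ 1 and every x > 0 the differential identity −λ_n K_n(x) + x K_n'(x) = (λ_n + 1) K_{n−1}(x) + x K_{n−1}'(x) holds. -/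
open Finset MeasureTheory intervalIntegral

/-!
The Euler operator `θ = x d/dx` is diagonal on powers, `θ x ^ p = p x ^ p`, so the identity
`(θ - λ_n) K_n = (θ + λ_n + 1) K_{n-1}` can be compared coefficient by coefficient. The operator
`θ - λ_n` annihilates the top term `x ^ λ_n` of `K_n`, and on the other powers the identity is
`(λ_j - λ_n) a_{j,n} = (λ_j + λ_n + 1) a_{j,n-1}`, since `a_{j,n}` arises from `a_{j,n-1}` by one
more factor in the numerator and one in the denominator.
-/

theorem hasDerivAt_sum_const_mul_rpow {ι : Type*} (s : Finset ι) (c p : ι → ℝ) {x : ℝ}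
    (hx : x ≠ 0) :
    HasDerivAt (fun y : ℝ => ∑ i ∈ s, c i * y ^ p i)
      (∑ i ∈ s, c i * (p i * x ^ (p i - 1))) x :=
  HasDerivAt.fun_sum fun i _ => (Real.hasDerivAt_rpow_const (Or.inl hx)).const_mul (c i)

theorem mul_deriv_sum_const_mul_rpow {ι : Type*} (s : Finset ι) (c p : ι → ℝ) {x : ℝ}
    (hx : x ≠ 0) :
    x * deriv (fun y : ℝ => ∑ i ∈ s, c i * y ^ p i) x = ∑ i ∈ s, p i * (c i * x ^ p i) := by
  rw [(hasDerivAt_sum_const_mul_rpow s c p hx).deriv, Finset.mul_sum]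
  refine Finset.sum_congr rfl fun i _ => ?_
  rw [Real.rpow_sub_one hx]
  field_simp

theorem mul_muntzK_add_mul_deriv_muntzK (lam : ℕ → ℝ) (n : ℕ) (α : ℝ) {x : ℝ} (hx : x ≠ 0) :
    α * muntzK lam n x + x * deriv (muntzK lam n) x =
      ∑ j ∈ Finset.Icc 1 n, (lam j + α) * muntzA lam n j * x ^ lam j := by
  have euler : x * deriv (muntzK lam n) x =
      ∑ j ∈ Finset.Icc 1 n, lam j * (muntzA lam n j * x ^ lam j) :=
    mul_deriv_sum_const_mul_rpow (Finset.Icc 1 n) (muntzA lam n) lam hx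
  rw [euler, muntzK, Finset.mul_sum, ← Finset.sum_add_distrib]
  exact Finset.sum_congr rfl fun j _ => by ring

theorem muntzA_succ_of_ne (lam : ℕ → ℝ) {m j : ℕ} (hj : j ≠ m + 1) :
    muntzA lam (m + 1) j =
      (lam j + lam (m + 1) + 1) / (lam j - lam (m + 1)) * muntzA lam m j := by
  have hIcc : Finset.Icc 1 (m + 1) = insert (m + 1) (Finset.Icc 1 m) :=
    (Finset.insert_Icc_right_eq_Icc_add_one (by omega)).symm
  have hmem : m + 1 ∉ Finset.Icc 1 m := by simp
  have hmem_erase : m + 1 ∉ (Finset.Icc 1 m).erase j := fun h => hmem (Finset.mem_of_mem_erase h)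
  rw [muntzA, muntzA, hIcc, Finset.erase_insert_of_ne hj.symm, Finset.prod_insert hmem,
    Finset.prod_insert hmem_erase, mul_div_mul_comm]

theorem sub_mul_muntzA_succ (lam : ℕ → ℝ) {m j : ℕ} (hne : lam j ≠ lam (m + 1)) :
    (lam j - lam (m + 1)) * muntzA lam (m + 1) j =
      (lam j + lam (m + 1) + 1) * muntzA lam m j := by
  have hj : j ≠ m + 1 := fun h => hne (congrArg lam h)
  rw [muntzA_succ_of_ne lam hj, ← mul_assoc, mul_div_cancel₀ _ (sub_ne_zero.mpr hne)]

theorem muntzK_differential_identity_general (lam : ℕ → ℝ) {n : ℕ} (hn : 1 ≤ n)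
    (hinj : Set.InjOn lam (Set.Icc 1 n)) {x : ℝ} (hx : 0 < x) :
    -(lam n) * muntzK lam n x + x * deriv (muntzK lam n) x =
      (lam n + 1) * muntzK lam (n - 1) x + x * deriv (muntzK lam (n - 1)) x := by
  obtain ⟨m, rfl⟩ := Nat.exists_eq_add_of_le' hn
  have recurrence : ∀ j ∈ Finset.Icc 1 m,
      (lam j + -lam (m + 1)) * muntzA lam (m + 1) j =
        (lam j + (lam (m + 1) + 1)) * muntzA lam m j := by
    intro j hj
    obtain ⟨hj_pos, hj_le⟩ := Finset.mem_Icc.mp hj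
    have hne : lam j ≠ lam (m + 1) :=
      hinj.ne ⟨hj_pos, by omega⟩ (Set.right_mem_Icc.mpr hn) (by omega)
    rw [← sub_eq_add_neg, ← add_assoc, sub_mul_muntzA_succ lam hne]
  rw [Nat.add_sub_cancel, mul_muntzK_add_mul_deriv_muntzK lam _ _ hx.ne',
    mul_muntzK_add_mul_deriv_muntzK lam _ _ hx.ne', Finset.sum_Icc_succ_top hn,
    add_neg_cancel, zero_mul, zero_mul, add_zero]
  exact Finset.sum_congr rfl fun j hj => by rw [recurrence j hj]

theorem muntzK_differential_identity (lam : ℕ → ℝ)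
    (hpos : ∀ j, 1 ≤ j → lam j > -(1/2 : ℝ))
    (hdist : ∀ j k, 1 ≤ j → 1 ≤ k → j ≠ k → lam j ≠ lam k) :
    ∀ n, 1 ≤ n → ∀ x : ℝ, 0 < x →
      -(lam n) * muntzK lam n x + x * deriv (muntzK lam n) x =
        (lam n + 1) * muntzK lam (n - 1) x + x * deriv (muntzK lam (n - 1)) x := by
  intro n hn x hx
  exact muntzK_differential_identity_general lam hn
    (fun j hj k hk => not_imp_not.mp (hdist j k hj.1 hk.1)) hx
end

section
/- Let n ≥ 1, let λ_1, …, λ_n be distinct real numbers with λ_j > −1/2, set p_j = λ_j + 1/2 > 0, and define K_n(x) = ∑_{j=1}^n a_{j,n} x^{λ_j} with a_{j,n} = (∏_{l=1}^n (λ_j + λ_l + 1)) / (∏_{l=1, l≠j}^n (λ_j − λ_l)), and ρ_n(x) = 1 − ∫_1^x K_n(1/r) (dr/r) for x ≥ 1. Then for every real ξ, ∫_0^∞ e^{iξt} e^{−t/2} ρ_n(e^t) dt = (1/(1/2 − iξ)) ∏_{j=1}^n (ξ − i p_j)/(ξ + i p_j), where i is the imaginary unit. -/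
open Finset MeasureTheory intervalIntegral

/-- `ρ_n(x) = 1 - ∫_1^x K_n(1/r) dr/r` for `x ≥ 1`. -/
noncomputable def muntzRho (lam : ℕ → ℝ) (n : ℕ) (x : ℝ) : ℝ :=
  1 - ∫ r in (1:ℝ)..x, muntzK lam n (1 / r) / r

/-!
The substitution `r = e^u` turns `ρ_n(e^t)` into `1 - ∫_0^t K_n(e^{-u}) du`, and the integral in
question is the Laplace transform of this function at `σ = 1/2 - iξ`. The Laplace transform sends
`e^{-λ_j u}` to `1 / (σ + λ_j)` and divides by `σ` under integration from `0`, so the value is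
`σ⁻¹ (1 - ∑ a_{j,n} / (σ + λ_j))`. The coefficients `a_{j,n}` are exactly those of the partial
fraction expansion of `∏ (σ - λ_j - 1) / (σ + λ_j)`.
-/

/-- The one-sided Laplace integral `∫_0^∞ e^{-σt} f(t) dt` converges absolutely and equals `L`.
Bundling convergence with the value keeps the linear manipulations free of junk integrals. -/
structure HasLaplaceTransformAt {E : Type*} [NormedAddCommGroup E] [NormedSpace ℂ E]
    (f : ℝ → E) (σ : ℂ) (L : E) : Prop where
  integrableOn : IntegrableOn (fun t : ℝ => Complex.exp (-σ * t) • f t) (Set.Ioi 0)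
  integral_eq : ∫ t in Set.Ioi (0 : ℝ), Complex.exp (-σ * t) • f t = L

namespace HasLaplaceTransformAt

section Linear

variable {E : Type*} [NormedAddCommGroup E] [NormedSpace ℂ E] {f g : ℝ → E} {σ : ℂ} {L M : E}

lemma sub (hf : HasLaplaceTransformAt f σ L) (hg : HasLaplaceTransformAt g σ M) :
    HasLaplaceTransformAt (fun t => f t - g t) σ (L - M) where
  integrableOn := by simpa only [smul_sub] using! hf.integrableOn.sub hg.integrableOn
  integral_eq := by
    simp only [smul_sub]
    rw [MeasureTheory.integral_sub hf.integrableOn hg.integrableOn, hf.integral_eq, hg.integral_eq]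

lemma const_smul (hf : HasLaplaceTransformAt f σ L) (c : ℂ) :
    HasLaplaceTransformAt (fun t => c • f t) σ (c • L) where
  integrableOn := by simpa only [smul_comm _ c] using! hf.integrableOn.smul c
  integral_eq := by
    simp only [smul_comm _ c]
    rw [MeasureTheory.integral_smul, hf.integral_eq]

lemma sum {ι : Type*} {s : Finset ι} {f : ι → ℝ → E} {L : ι → E}
    (hf : ∀ j ∈ s, HasLaplaceTransformAt (f j) σ (L j)) :
    HasLaplaceTransformAt (fun t => ∑ j ∈ s, f j t) σ (∑ j ∈ s, L j) where
  integrableOn := by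
    simpa only [Finset.smul_sum] using! integrable_finsetSum s fun j hj => (hf j hj).integrableOn
  integral_eq := by
    simp only [Finset.smul_sum]
    rw [MeasureTheory.integral_finsetSum s fun j hj => (hf j hj).integrableOn]
    exact Finset.sum_congr rfl fun j hj => (hf j hj).integral_eq

end Linear

lemma exp_neg_mul {σ μ : ℂ} (h : 0 < (σ + μ).re) :
    HasLaplaceTransformAt (fun t : ℝ => Complex.exp (-μ * t)) σ (σ + μ)⁻¹ := by
  have hre : (-(σ + μ)).re < 0 := by simpa only [Complex.neg_re, neg_lt_zero] using h
  have hexp (t : ℝ) :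
      Complex.exp (-σ * t) • Complex.exp (-μ * t) = Complex.exp (-(σ + μ) * t) := by
    rw [smul_eq_mul, ← Complex.exp_add]
    ring_nf
  constructor
  · simpa only [hexp] using integrableOn_exp_mul_complex_Ioi hre 0
  · simp only [hexp]
    rw [integral_exp_mul_complex_Ioi hre, Complex.ofReal_zero, mul_zero, Complex.exp_zero,
      neg_div_neg_eq, one_div]

lemma one {σ : ℂ} (hσ : 0 < σ.re) : HasLaplaceTransformAt (fun _ => (1 : ℂ)) σ σ⁻¹ := by
  simpa using exp_neg_mul (σ := σ) (μ := 0) (by simpa using hσ)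

/-- Weighted by `e^{-σt}`, the primitive of `f` is the convolution on `(0, ∞)` of `e^{-σt}` with
`e^{-σt} f(t)`. -/
lemma primitive {E : Type*} [NormedAddCommGroup E] [NormedSpace ℂ E] [CompleteSpace E]
    {f : ℝ → E} {σ : ℂ} {L : E} (hσ : 0 < σ.re) (hf : HasLaplaceTransformAt f σ L) :
    HasLaplaceTransformAt (fun t => ∫ u in (0 : ℝ)..t, f u) σ (σ⁻¹ • L) := by
  have hre : (-σ).re < 0 := by simpa only [Complex.neg_re, neg_lt_zero] using hσ
  have hexp := integrableOn_exp_mul_complex_Ioi hre 0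
  let B : ℂ →L[ℝ] E →L[ℝ] E := ContinuousLinearMap.lsmul ℝ ℂ
  have hconv (t : ℝ) :
      ∫ u in (0 : ℝ)..t, B (Complex.exp (-σ * u))
        (Complex.exp (-σ * ((t - u : ℝ) : ℂ)) • f (t - u)) =
      Complex.exp (-σ * t) • ∫ u in (0 : ℝ)..t, f u := by
    have hmul (u : ℝ) : B (Complex.exp (-σ * u))
        (Complex.exp (-σ * ((t - u : ℝ) : ℂ)) • f (t - u)) =
        Complex.exp (-σ * t) • f (t - u) := by
      rw [ContinuousLinearMap.lsmul_apply, smul_smul, ← Complex.exp_add]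
      push_cast
      ring_nf
    simp only [hmul]
    rw [intervalIntegral.integral_smul, intervalIntegral.integral_comp_sub_left, sub_self, sub_zero]
  constructor
  · have h := integrable_posConvolution hexp hf.integrableOn B
    rw [posConvolution, integrable_indicator_iff measurableSet_Ioi] at h
    simpa only [hconv] using h
  · have h := integral_posConvolution hexp hf.integrableOn B
    simp only [hconv] at h
    rw [h, hf.integral_eq, integral_exp_mul_complex_Ioi hre]
    simp [B]

end HasLaplaceTransformAt

/-- Lagrange interpolation at the poles, applied to `P - ∏ (X - v j)`, which has degree `< #s`. -/
lemma eval_div_prod_sub_eq_one_add_sum {ι F : Type*} [DecidableEq ι] [Field F] {s : Finset ι}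
    {v : ι → F} {P : Polynomial F} (hP : P.Monic) (hdeg : P.degree = #s) (hv : Set.InjOn v s)
    {x : F} (hx : ∀ j ∈ s, x ≠ v j) :
    P.eval x / ∏ j ∈ s, (x - v j) =
      1 + ∑ j ∈ s, P.eval (v j) / (∏ l ∈ s.erase j, (v j - v l)) / (x - v j) := by
  have hlt : (P - Lagrange.nodal s v).degree < #s := by
    rw [← hdeg]
    exact Polynomial.degree_sub_lt_left (by rw [hdeg, Lagrange.degree_nodal]) hP.ne_zero
      (by rw [hP, Lagrange.nodal_monic])
  have hnode : ∀ j ∈ s, (P - Lagrange.nodal s v).eval (v j) = P.eval (v j) := fun j hj => by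
    rw [Polynomial.eval_sub, Lagrange.eval_nodal_at_node hj, sub_zero]
  have hinterp := congrArg (Polynomial.eval x) (Lagrange.eq_interpolate_of_eval_eq _ hv hlt hnode)
  rw [Lagrange.eval_interpolate_not_at_node _ hx, Polynomial.eval_sub, Lagrange.eval_nodal,
    sub_eq_iff_eq_add'] at hinterp
  have hne : ∏ j ∈ s, (x - v j) ≠ 0 :=
    Finset.prod_ne_zero_iff.mpr fun j hj => sub_ne_zero.mpr (hx j hj)
  rw [hinterp, add_div, div_self hne, mul_div_cancel_left₀ _ hne]
  refine congrArg _ (Finset.sum_congr rfl fun j _ => ?_)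
  rw [Lagrange.nodalWeight, Finset.prod_inv_distrib]
  ring

lemma integral_inv_smul_comp_one_div {E : Type*} [NormedAddCommGroup E] [NormedSpace ℝ E]
    (f : ℝ → E) (t : ℝ) :
    ∫ r in (1 : ℝ)..Real.exp t, r⁻¹ • f (1 / r) = ∫ u in (0 : ℝ)..t, f (Real.exp (-u)) := by
  have h := integral_deriv_smul_comp_of_deriv_nonneg (a := 0) (b := t)
    (g := fun r => r⁻¹ • f (1 / r)) Real.continuous_exp.continuousOn
    (fun u _ => Real.hasDerivAt_exp u) (fun u _ => (Real.exp_pos u).le)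
  simpa [smul_smul, Real.exp_neg, Real.exp_ne_zero] using h.symm

lemma muntzRho_exp (lam : ℕ → ℝ) (n : ℕ) (t : ℝ) :
    muntzRho lam n (Real.exp t) = 1 - ∫ u in (0 : ℝ)..t, muntzK lam n (Real.exp (-u)) := by
  rw [muntzRho, ← integral_inv_smul_comp_one_div]
  simp only [smul_eq_mul, div_eq_inv_mul]

section Muntz

variable {lam : ℕ → ℝ} {n : ℕ} {σ : ℂ}

lemma one_sub_sum_muntzA_div (hdist : Set.InjOn lam (Finset.Icc 1 n))
    (hσ : ∀ j ∈ Finset.Icc 1 n, σ + lam j ≠ 0) :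
    1 - ∑ j ∈ Finset.Icc 1 n, (muntzA lam n j : ℂ) / (σ + lam j) =
      ∏ j ∈ Finset.Icc 1 n, (σ - lam j - 1) / (σ + lam j) := by
  have hv : Set.InjOn (fun j => (lam j : ℂ)) (Finset.Icc 1 n) :=
    Complex.ofReal_injective.comp_injOn hdist
  have hx : ∀ j ∈ Finset.Icc 1 n, -σ ≠ lam j := fun j hj h => hσ j hj (by rw [← h, add_neg_cancel])
  have h := eval_div_prod_sub_eq_one_add_sum
    (Lagrange.nodal_monic (s := Finset.Icc 1 n) (v := fun l => -((lam l : ℂ) + 1)))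
    Lagrange.degree_nodal hv hx
  have hfactor (j : ℕ) : (-σ - (-((lam j : ℂ) + 1))) / (-σ - lam j) =
      (σ - lam j - 1) / (σ + lam j) := by
    rw [← neg_div_neg_eq]
    ring_nf
  have hcoeff (j : ℕ) : (∏ l ∈ Finset.Icc 1 n, ((lam j : ℂ) - (-((lam l : ℂ) + 1)))) /
      (∏ l ∈ (Finset.Icc 1 n).erase j, ((lam j : ℂ) - lam l)) = muntzA lam n j := by
    rw [muntzA]
    push_cast
    simp only [sub_neg_eq_add, ← add_assoc]
  have hpole (j : ℕ) : -σ - lam j = -(σ + lam j) := by ring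
  simp only [Lagrange.eval_nodal, ← Finset.prod_div_distrib, hfactor, hcoeff] at h
  simp only [hpole, div_neg, Finset.sum_neg_distrib, ← sub_eq_add_neg] at h
  exact h.symm

lemma hasLaplaceTransformAt_muntzK (hσ : ∀ j ∈ Finset.Icc 1 n, 0 < σ.re + lam j) :
    HasLaplaceTransformAt (fun u => (muntzK lam n (Real.exp (-u)) : ℂ)) σ
      (∑ j ∈ Finset.Icc 1 n, (muntzA lam n j : ℂ) / (σ + lam j)) := by
  have hterm : ∀ j ∈ Finset.Icc 1 n, HasLaplaceTransformAt
      (fun u : ℝ => (muntzA lam n j : ℂ) • Complex.exp (-(lam j : ℂ) * u)) σ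
      ((muntzA lam n j : ℂ) • (σ + lam j)⁻¹) := fun j hj =>
    (HasLaplaceTransformAt.exp_neg_mul (by simpa using hσ j hj)).const_smul _
  convert! HasLaplaceTransformAt.sum hterm using 2 with u
  simp only [muntzK, ← Real.exp_mul]
  push_cast
  simp only [smul_eq_mul, neg_mul, mul_comm (u : ℂ)]

lemma hasLaplaceTransformAt_muntzRho (hdist : Set.InjOn lam (Finset.Icc 1 n)) (hσ : 0 < σ.re)
    (hσlam : ∀ j ∈ Finset.Icc 1 n, 0 < σ.re + lam j) :
    HasLaplaceTransformAt (fun t => (muntzRho lam n (Real.exp t) : ℂ)) σ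
      (σ⁻¹ * ∏ j ∈ Finset.Icc 1 n, (σ - lam j - 1) / (σ + lam j)) := by
  have hne : ∀ j ∈ Finset.Icc 1 n, σ + lam j ≠ 0 := fun j hj h =>
    (hσlam j hj).ne' (by simpa using congrArg Complex.re h)
  rw [← one_sub_sum_muntzA_div hdist hne, mul_sub, mul_one]
  convert! (HasLaplaceTransformAt.one hσ).sub
    ((hasLaplaceTransformAt_muntzK hσlam).primitive hσ) using 2 with t
  rw [muntzRho_exp, Complex.ofReal_sub, Complex.ofReal_one, intervalIntegral.integral_ofReal]

end Muntz

theorem muntz_fourier_transform_general (n : ℕ) (lam : ℕ → ℝ) (ξ : ℂ)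
    (hξ : -(1 / 2 : ℝ) < ξ.im)
    (hpos : ∀ j ∈ Finset.Icc 1 n, lam j > -(1 / 2 : ℝ) - ξ.im)
    (hdist : ∀ j ∈ Finset.Icc 1 n, ∀ k ∈ Finset.Icc 1 n, j ≠ k → lam j ≠ lam k) :
    IntegrableOn (fun t : ℝ => Complex.exp (Complex.I * ξ * t) * Real.exp (-t / 2) *
        (muntzRho lam n (Real.exp t) : ℂ)) (Set.Ioi 0) ∧
      (∫ t in Set.Ioi (0 : ℝ),
          Complex.exp (Complex.I * ξ * t) * Real.exp (-t / 2) * (muntzRho lam n (Real.exp t) : ℂ))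
        = (1 / ((1 / 2 : ℂ) - Complex.I * ξ)) *
            ∏ j ∈ Finset.Icc 1 n,
              (ξ - Complex.I * (lam j + 1 / 2)) / (ξ + Complex.I * (lam j + 1 / 2)) := by
  set σ : ℂ := 1 / 2 - Complex.I * ξ with hσ
  have hre : σ.re = 1 / 2 + ξ.im := by simp [hσ]
  have hinj : Set.InjOn lam (Finset.Icc 1 n) := fun j hj k hk h => by
    by_contra hjk
    exact hdist j hj k hk hjk h
  have hL := hasLaplaceTransformAt_muntzRho hinj (σ := σ) (by linarith)
    fun j hj => by linarith [hpos j hj]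
  have hkernel (t : ℝ) : Complex.exp (Complex.I * ξ * t) * Real.exp (-t / 2) =
      Complex.exp (-σ * t) := by
    rw [Complex.ofReal_exp, ← Complex.exp_add, hσ]
    push_cast
    ring_nf
  have hfactor (j : ℕ) : (ξ - Complex.I * (lam j + 1 / 2)) / (ξ + Complex.I * (lam j + 1 / 2)) =
      (σ - lam j - 1) / (σ + lam j) := by
    rw [← mul_div_mul_left _ _ (neg_ne_zero.mpr Complex.I_ne_zero)]
    congr 1
    · linear_combination ((lam j : ℂ) + 1 / 2) * Complex.I_mul_I - hσ
    · linear_combination -((lam j : ℂ) + 1 / 2) * Complex.I_mul_I - hσ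
  simp only [hkernel, hfactor]
  rw [one_div]
  exact ⟨hL.integrableOn, hL.integral_eq⟩

theorem muntz_fourier_transform (n : ℕ) (hn : 1 ≤ n) (lam : ℕ → ℝ)
    (hpos : ∀ j ∈ Finset.Icc 1 n, lam j > -(1/2 : ℝ))
    (hdist : ∀ j ∈ Finset.Icc 1 n, ∀ k ∈ Finset.Icc 1 n, j ≠ k → lam j ≠ lam k) :
    ∀ ξ : ℝ,
      (∫ t in Set.Ioi (0:ℝ),
          Complex.exp (Complex.I * ξ * t) * Real.exp (-t / 2) * (muntzRho lam n (Real.exp t) : ℂ))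
        = (1 / ((1/2 : ℂ) - Complex.I * ξ)) *
            ∏ j ∈ Finset.Icc 1 n,
              ((ξ : ℂ) - Complex.I * (lam j + 1/2)) / ((ξ : ℂ) + Complex.I * (lam j + 1/2)) := by
  exact fun ξ =>
    (muntz_fourier_transform_general n lam ξ (by norm_num) (by simpa using hpos) hdist).2
end

section
/- Let n ≥ 1, let λ_1, …, λ_n be distinct real numbers with λ_j > −1/2, define K_n(x) = ∑_{j=1}^n a_{j,n} x^{λ_j} with a_{j,n} = (∏_{l=1}^n (λ_j + λ_l + 1)) / (∏_{l=1, l≠j}^n (λ_j − λ_l)), and ρ_n(x) = 1 − ∫_1^x K_n(1/r) (dr/r) for x ≥ 1. Then for every k ∈ {1, …, n}, ∫_0^1 u^{λ_k} ρ_n(1/u) du = 0. -/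
open Finset MeasureTheory intervalIntegral

/-!
Substituting `s = 1 / r` gives `ρ_n(1/u) = 1 - ∫_u^1 K_n(s) ds/s`, and Fubini on the triangle
`u ≤ s ≤ 1` then yields `∫_0^1 u^a ρ_n(1/u) du = (1 - ∫_0^1 u^a K_n(u) du) / (a + 1)`. The integral
on the right is `∑_j a_{j,n} / (λ_j + a + 1)`. For `a = λ_k` the factor `λ_j + λ_k + 1` cancels
from the numerator of `a_{j,n}`, and what remains is the Lagrange formula for the leading
coefficient of the monic polynomial `∏_{l ≠ k} (X + λ_l + 1)` of degree `n - 1`, so the sum is `1`.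
-/

lemma sum_prod_add_div_prod_sub_eq_one_s14 {F ι κ : Type*} [Field F] [DecidableEq ι]
    {s : Finset ι} {t : Finset κ} {v : ι → F} (w : κ → F) (hv : Set.InjOn v s)
    (hcard : #s = #t + 1) :
    ∑ i ∈ s, (∏ l ∈ t, (v i + w l)) / ∏ l ∈ s.erase i, (v i - v l) = 1 := by
  let P : Polynomial F := ∏ l ∈ t, (Polynomial.X + Polynomial.C (w l))
  have hmonic : P.Monic :=
    Polynomial.monic_prod_of_monic _ _ fun l _ ↦ Polynomial.monic_X_add_C (w l)
  have hdeg : #s = P.degree + 1 := by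
    simp [P, Polynomial.degree_prod, hcard]
  simpa [hmonic.leadingCoeff, P, Polynomial.eval_prod] using
    (Lagrange.leadingCoeff_eq_sum hv hdeg).symm

section Triangle

variable {E : Type*} [NormedAddCommGroup E] [NormedSpace ℝ E] {a b : ℝ} {g : ℝ → ℝ} {h : ℝ → E}

lemma setIntegral_indicator_Iic_eq_intervalIntegral (g : ℝ → ℝ) {s : ℝ} (hs : s ∈ Set.Ioc a b) :
    ∫ u in Set.Ioc a b, (Set.Iic s).indicator g u = ∫ u in a..s, g u := by
  rw [setIntegral_indicator measurableSet_Iic, Set.Ioc_inter_Iic, min_eq_right hs.2,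
    integral_of_le hs.1.le]

lemma setIntegral_indicator_Iic_apply_smul (g : ℝ → ℝ) (h : ℝ → E) {u : ℝ}
    (hu : u ∈ Set.Ioc a b) :
    ∫ s in Set.Ioc a b, (Set.Iic s).indicator g u • h s = g u • ∫ s in u..b, h s := by
  have hinter : Set.Ioc a b ∩ Set.Ici u = Set.Icc u b := by grind
  have hindicator (s : ℝ) : (Set.Iic s).indicator g u • h s =
      (Set.Ici u).indicator (fun s ↦ g u • h s) s := by
    by_cases hus : u ≤ s <;> simp [hus]
  simp only [hindicator]
  rw [setIntegral_indicator measurableSet_Ici, hinter, integral_Icc_eq_integral_Ioc,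
    MeasureTheory.integral_smul, integral_of_le hu.2]

lemma integrable_indicator_Iic_smul (hg : IntegrableOn g (Set.Ioc a b))
    (hh : AEStronglyMeasurable h (volume.restrict (Set.Ioc a b)))
    (hgh : IntegrableOn (fun s ↦ (∫ u in a..s, ‖g u‖) • h s) (Set.Ioc a b)) :
    Integrable (fun p : ℝ × ℝ ↦ (Set.Iic p.2).indicator g p.1 • h p.2)
      ((volume.restrict (Set.Ioc a b)).prod (volume.restrict (Set.Ioc a b))) := by
  have hmeas : MeasurableSet {p : ℝ × ℝ | p.1 ≤ p.2} :=
    measurableSet_le measurable_fst measurable_snd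
  refine (integrable_prod_iff' ((hg.1.comp_fst.indicator hmeas).smul hh.comp_snd)).2 ⟨?_, ?_⟩
  · filter_upwards with s
    exact (hg.indicator measurableSet_Iic).smul_const (h s)
  · refine hgh.norm.congr (ae_restrict_of_forall_mem measurableSet_Ioc fun s hs ↦ Eq.symm ?_)
    have hnonneg : 0 ≤ ∫ u in a..s, ‖g u‖ :=
      intervalIntegral.integral_nonneg hs.1.le fun u _ ↦ norm_nonneg _
    calc ∫ u in Set.Ioc a b, ‖(Set.Iic s).indicator g u • h s‖
        = (∫ u in Set.Ioc a b, (Set.Iic s).indicator (‖g ·‖) u) * ‖h s‖ := by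
          simp only [norm_smul, norm_indicator_eq_indicator_norm,
            MeasureTheory.integral_mul_const]
      _ = ‖(∫ u in a..s, ‖g u‖) • h s‖ := by
          rw [setIntegral_indicator_Iic_eq_intervalIntegral _ hs, norm_smul,
            Real.norm_of_nonneg hnonneg]

lemma intervalIntegrable_smul_integral (hab : a ≤ b) (hg : IntegrableOn g (Set.Ioc a b))
    (hh : AEStronglyMeasurable h (volume.restrict (Set.Ioc a b)))
    (hgh : IntegrableOn (fun s ↦ (∫ u in a..s, ‖g u‖) • h s) (Set.Ioc a b)) :
    IntervalIntegrable (fun u ↦ g u • ∫ s in u..b, h s) volume a b := by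
  rw [intervalIntegrable_iff_integrableOn_Ioc_of_le hab]
  exact (integrable_indicator_Iic_smul hg hh hgh).integral_prod_left.congr
    (ae_restrict_of_forall_mem measurableSet_Ioc fun _ ↦ setIntegral_indicator_Iic_apply_smul g h)

lemma integral_smul_integral_swap_triangle [CompleteSpace E] (hab : a ≤ b)
    (hg : IntegrableOn g (Set.Ioc a b))
    (hh : AEStronglyMeasurable h (volume.restrict (Set.Ioc a b)))
    (hgh : IntegrableOn (fun s ↦ (∫ u in a..s, ‖g u‖) • h s) (Set.Ioc a b)) :
    ∫ u in a..b, g u • ∫ s in u..b, h s = ∫ s in a..b, (∫ u in a..s, g u) • h s := by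
  rw [integral_of_le hab, integral_of_le hab]
  calc ∫ u in Set.Ioc a b, g u • ∫ s in u..b, h s
      = ∫ u in Set.Ioc a b, ∫ s in Set.Ioc a b, (Set.Iic s).indicator g u • h s :=
        setIntegral_congr_fun measurableSet_Ioc fun _ hu ↦
          (setIntegral_indicator_Iic_apply_smul g h hu).symm
    _ = ∫ s in Set.Ioc a b, ∫ u in Set.Ioc a b, (Set.Iic s).indicator g u • h s :=
        integral_integral_swap (integrable_indicator_Iic_smul hg hh hgh)
    _ = ∫ s in Set.Ioc a b, (∫ u in a..s, g u) • h s :=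
        setIntegral_congr_fun measurableSet_Ioc fun s hs ↦ by
          simp only [_root_.integral_smul_const,
            setIntegral_indicator_Iic_eq_intervalIntegral g hs]

end Triangle

section PowerWeight

variable {E : Type*} [NormedAddCommGroup E] [NormedSpace ℝ E] {a b : ℝ} {f : ℝ → E}

lemma integral_rpow_smul_inv_smul (ha : -1 < a) {s : ℝ} (hs : 0 < s) (x : E) :
    (∫ u in 0..s, u ^ a) • s⁻¹ • x = (a + 1)⁻¹ • s ^ a • x := by
  have ha' : a + 1 ≠ 0 := by linarith
  rw [integral_rpow (Or.inl ha), Real.zero_rpow ha', Real.rpow_add_one hs.ne', smul_smul,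
    smul_smul]
  congr 1
  field_simp
  ring

lemma aestronglyMeasurable_inv_smul_of_rpow_smul
    (hf : IntegrableOn (fun s ↦ s ^ a • f s) (Set.Ioc 0 b)) :
    AEStronglyMeasurable (fun s ↦ s⁻¹ • f s) (volume.restrict (Set.Ioc 0 b)) := by
  have hweight : Measurable fun s : ℝ ↦ s⁻¹ * (s ^ a)⁻¹ := by fun_prop
  refine (hweight.aestronglyMeasurable.smul hf.1).congr
    (ae_restrict_of_forall_mem measurableSet_Ioc fun s hs ↦ ?_)
  have hne : s ^ a ≠ 0 := (Real.rpow_pos_of_pos hs.1 a).ne'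
  simp [smul_smul, hne]

lemma integrableOn_integral_norm_rpow_smul_inv_smul (ha : -1 < a)
    (hf : IntegrableOn (fun s ↦ s ^ a • f s) (Set.Ioc 0 b)) :
    IntegrableOn (fun s ↦ (∫ u in 0..s, ‖u ^ a‖) • s⁻¹ • f s) (Set.Ioc 0 b) := by
  refine (hf.smul (a + 1)⁻¹).congr (ae_restrict_of_forall_mem measurableSet_Ioc fun s hs ↦ ?_)
  have hnorm : ∫ u in 0..s, ‖u ^ a‖ = ∫ u in 0..s, u ^ a := integral_congr fun u hu ↦
    Real.norm_of_nonneg (Real.rpow_nonneg (Set.uIcc_of_le hs.1.le ▸ hu).1 a)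
  simp only [hnorm, integral_rpow_smul_inv_smul ha hs.1, Pi.smul_apply]

lemma intervalIntegrable_rpow_smul_integral_inv_smul (ha : -1 < a) (hb : 0 ≤ b)
    (hf : IntervalIntegrable (fun s ↦ s ^ a • f s) volume 0 b) :
    IntervalIntegrable (fun u ↦ u ^ a • ∫ s in u..b, s⁻¹ • f s) volume 0 b := by
  rw [intervalIntegrable_iff_integrableOn_Ioc_of_le hb] at hf
  exact intervalIntegrable_smul_integral hb
    ((intervalIntegrable_iff_integrableOn_Ioc_of_le hb).1 (intervalIntegrable_rpow' ha))
    (aestronglyMeasurable_inv_smul_of_rpow_smul hf)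
    (integrableOn_integral_norm_rpow_smul_inv_smul ha hf)

lemma integral_rpow_smul_integral_inv_smul [CompleteSpace E] (ha : -1 < a) (hb : 0 ≤ b)
    (hf : IntervalIntegrable (fun s ↦ s ^ a • f s) volume 0 b) :
    ∫ u in 0..b, u ^ a • ∫ s in u..b, s⁻¹ • f s = (a + 1)⁻¹ • ∫ s in 0..b, s ^ a • f s := by
  rw [intervalIntegrable_iff_integrableOn_Ioc_of_le hb] at hf
  rw [integral_smul_integral_swap_triangle hb
      ((intervalIntegrable_iff_integrableOn_Ioc_of_le hb).1 (intervalIntegrable_rpow' ha))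
      (aestronglyMeasurable_inv_smul_of_rpow_smul hf)
      (integrableOn_integral_norm_rpow_smul_inv_smul ha hf),
    integral_of_le hb, integral_of_le hb, ← MeasureTheory.integral_smul]
  exact setIntegral_congr_fun measurableSet_Ioc fun s hs ↦
    integral_rpow_smul_inv_smul ha hs.1 (f s)

end PowerWeight

lemma integral_inv_smul_comp_inv {E : Type*} [NormedAddCommGroup E] [NormedSpace ℝ E]
    (f : ℝ → E) {x y : ℝ} (hx : 0 < x) (hy : 0 < y) :
    ∫ r in x..y, r⁻¹ • f r⁻¹ = ∫ s in y⁻¹..x⁻¹, s⁻¹ • f s := by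
  have hpos : ∀ r ∈ Set.uIcc x y, 0 < r := fun r hr ↦ (lt_min hx hy).trans_le hr.1
  have hsubst : ∫ r in x..y, -(r ^ 2)⁻¹ • r⁻¹⁻¹ • f r⁻¹ = ∫ s in x⁻¹..y⁻¹, s⁻¹ • f s :=
    integral_deriv_smul_comp_of_deriv_nonpos (g := fun s ↦ s⁻¹ • f s)
      (continuousOn_inv₀.mono fun r hr ↦ (hpos r hr).ne')
      (fun r hr ↦ hasDerivAt_inv (hpos r (Set.Ioo_subset_Icc_self hr)).ne')
      (fun r _ ↦ neg_nonpos.2 (inv_nonneg.2 (sq_nonneg r)))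
  rw [intervalIntegral.integral_symm x⁻¹, ← hsubst, ← intervalIntegral.integral_neg]
  refine integral_congr fun r hr ↦ ?_
  have hr' : r ≠ 0 := (hpos r hr).ne'
  simp only [smul_smul, ← neg_smul]
  congr 1
  field_simp

section Muntz

variable {lam : ℕ → ℝ} {n : ℕ} {a : ℝ}

lemma muntzRho_one_div (lam : ℕ → ℝ) (n : ℕ) {u : ℝ} (hu : 0 < u) :
    muntzRho lam n (1 / u) = 1 - ∫ s in u..1, s⁻¹ • muntzK lam n s := by
  have hsubst := integral_inv_smul_comp_inv (muntzK lam n) one_pos (inv_pos.2 hu)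
  rw [inv_inv, inv_one] at hsubst
  rw [muntzRho, ← hsubst, one_div]
  simp only [one_div, smul_eq_mul, inv_mul_eq_div]

lemma rpow_mul_muntzK (lam : ℕ → ℝ) (n : ℕ) (a : ℝ) {u : ℝ} (hu : 0 < u) :
    u ^ a * muntzK lam n u = ∑ j ∈ Finset.Icc 1 n, muntzA lam n j * u ^ (lam j + a) := by
  simp only [muntzK, Finset.mul_sum, Real.rpow_add hu]
  exact Finset.sum_congr rfl fun j _ ↦ by ring

lemma intervalIntegrable_rpow_mul_muntzK (ha : ∀ j ∈ Finset.Icc 1 n, -1 < lam j + a) :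
    IntervalIntegrable (fun u ↦ u ^ a * muntzK lam n u) volume 0 1 := by
  have hsum : IntervalIntegrable
      (fun u ↦ ∑ j ∈ Finset.Icc 1 n, muntzA lam n j * u ^ (lam j + a)) volume 0 1 := by
    simpa only [Finset.sum_fn] using IntervalIntegrable.sum (Finset.Icc 1 n) fun j hj ↦
      (intervalIntegrable_rpow' (ha j hj)).const_mul (muntzA lam n j)
  exact hsum.congr fun u hu ↦
    (rpow_mul_muntzK lam n a (Set.uIoc_of_le (zero_le_one' ℝ) ▸ hu).1).symm

lemma integral_rpow_mul_muntzK_s14 (ha : ∀ j ∈ Finset.Icc 1 n, -1 < lam j + a) :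
    ∫ u in 0..1, u ^ a * muntzK lam n u =
      ∑ j ∈ Finset.Icc 1 n, muntzA lam n j / (lam j + a + 1) := by
  calc ∫ u in 0..1, u ^ a * muntzK lam n u
      = ∫ u in 0..1, ∑ j ∈ Finset.Icc 1 n, muntzA lam n j * u ^ (lam j + a) :=
        integral_congr_ae (.of_forall fun u hu ↦
          rpow_mul_muntzK lam n a (Set.uIoc_of_le (zero_le_one' ℝ) ▸ hu).1)
    _ = ∑ j ∈ Finset.Icc 1 n, muntzA lam n j * ∫ u in 0..1, u ^ (lam j + a) := by
        rw [intervalIntegral.integral_finsetSum fun j hj ↦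
          (intervalIntegrable_rpow' (ha j hj)).const_mul _]
        simp only [intervalIntegral.integral_const_mul]
    _ = ∑ j ∈ Finset.Icc 1 n, muntzA lam n j / (lam j + a + 1) := by
        refine Finset.sum_congr rfl fun j hj ↦ ?_
        have hne : lam j + a + 1 ≠ 0 := by linarith [ha j hj]
        rw [integral_rpow (Or.inl (ha j hj)), Real.one_rpow, Real.zero_rpow hne, sub_zero,
          mul_one_div]

lemma integral_rpow_mul_muntzRho (ha : -1 < a) (hlam : ∀ j ∈ Finset.Icc 1 n, -1 < lam j + a) :
    ∫ u in 0..1, u ^ a * muntzRho lam n (1 / u) =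
      (1 - ∑ j ∈ Finset.Icc 1 n, muntzA lam n j / (lam j + a + 1)) / (a + 1) := by
  have ha' : a + 1 ≠ 0 := by linarith
  have hK := intervalIntegrable_rpow_mul_muntzK hlam
  calc ∫ u in 0..1, u ^ a * muntzRho lam n (1 / u)
      = ∫ u in 0..1, (u ^ a - u ^ a • ∫ s in u..1, s⁻¹ • muntzK lam n s) :=
        integral_congr_ae (.of_forall fun u hu ↦ by
          rw [muntzRho_one_div lam n (Set.uIoc_of_le (zero_le_one' ℝ) ▸ hu).1, mul_sub, mul_one,
            smul_eq_mul])
    _ = (∫ u in 0..1, u ^ a) - (a + 1)⁻¹ • ∫ u in 0..1, u ^ a • muntzK lam n u := by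
        rw [intervalIntegral.integral_sub (intervalIntegrable_rpow' ha)
            (intervalIntegrable_rpow_smul_integral_inv_smul ha zero_le_one hK),
          integral_rpow_smul_integral_inv_smul ha zero_le_one hK]
    _ = (1 - ∑ j ∈ Finset.Icc 1 n, muntzA lam n j / (lam j + a + 1)) / (a + 1) := by
        simp only [smul_eq_mul]
        rw [integral_rpow_mul_muntzK_s14 hlam, integral_rpow (Or.inl ha), Real.one_rpow,
          Real.zero_rpow ha']
        ring

lemma sum_muntzA_div_eq_one (hlam : Set.InjOn lam (Finset.Icc 1 n)) {k : ℕ}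
    (hk : k ∈ Finset.Icc 1 n) (hne : ∀ j ∈ Finset.Icc 1 n, lam j + lam k + 1 ≠ 0) :
    ∑ j ∈ Finset.Icc 1 n, muntzA lam n j / (lam j + lam k + 1) = 1 := by
  refine Eq.trans (Finset.sum_congr rfl fun j hj ↦ ?_) (sum_prod_add_div_prod_sub_eq_one_s14
    (fun l ↦ lam l + 1) hlam (Finset.card_erase_add_one hk).symm)
  rw [muntzA, ← Finset.mul_prod_erase _ _ hk, div_right_comm, mul_div_cancel_left₀ _ (hne j hj)]
  simp only [add_assoc]

theorem muntzRho_orthogonality_general (hdist : Set.InjOn lam (Finset.Icc 1 n)) {k : ℕ}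
    (hk : k ∈ Finset.Icc 1 n) (hpos : ∀ j ∈ Finset.Icc 1 n, -1 < lam j + lam k) :
    ∫ u in 0..1, u ^ lam k * muntzRho lam n (1 / u) = 0 := by
  have hlam_k : -1 < lam k := by linarith [hpos k hk]
  have hsum : ∑ j ∈ Finset.Icc 1 n, muntzA lam n j / (lam j + lam k + 1) = 1 :=
    sum_muntzA_div_eq_one hdist hk fun j hj ↦ by linarith [hpos j hj]
  rw [integral_rpow_mul_muntzRho hlam_k hpos, hsum, sub_self, zero_div]

end Muntz

theorem muntzRho_orthogonality (n : ℕ) (hn : 1 ≤ n) (lam : ℕ → ℝ)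
    (hpos : ∀ j ∈ Finset.Icc 1 n, lam j > -(1/2 : ℝ))
    (hdist : ∀ j ∈ Finset.Icc 1 n, ∀ k ∈ Finset.Icc 1 n, j ≠ k → lam j ≠ lam k) :
    ∀ k ∈ Finset.Icc 1 n,
      (∫ u in (0:ℝ)..1, u ^ lam k * muntzRho lam n (1 / u)) = 0 := fun k hk ↦
  muntzRho_orthogonality_general (fun i hi j hj ↦ not_imp_not.1 (hdist i hi j hj)) hk
    fun j hj ↦ by linarith [hpos j hj, hpos k hk]
end

section
/- Let λ_1, λ_2, … be distinct real numbers with λ_j > −1/2, and define K_n(x) = ∑_{j=1}^n a_{j,n} x^{λ_j} on (0,1], where a_{j,n} = (∏_{l=1}^n (λ_j + λ_l + 1)) / (∏_{l=1, l≠j}^n (λ_j − λ_l)). Then for all integers 0 ≤ m < n, ∫_0^1 (K_n(u) − K_m(u))² du = ∑_{j=m+1}^n (1 + 2λ_j) (with convention K_0 ≡ 0). In particular, if ∑_{j=1}^∞ (1 + 2λ_j) < ∞ then (K_n) is a Cauchy sequence in L²[0,1]. -/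
open Finset MeasureTheory intervalIntegral

/-! In `L²(0, 1)`, the Müntz polynomial attached to finitely many exponents `λ_j` represents
evaluation at `1` on the span of the `x ^ λ_j`: its inner product with `∑ j, c j * x ^ λ_j` is
`∑ j, c j`. Dropping exponents therefore projects it orthogonally onto the smaller span, so that by
Pythagoras the squared distance is a difference of squared norms, and the squared norm of a Müntz
polynomial is its own value at `1`. Both this value and the reproducing property are instances of
Lagrange interpolation at the nodes `λ_j`: they compare the top coefficients of a monic polynomial
with its values at the nodes. -/

section Lagrange

open Polynomial

variable {F ι : Type*} [Field F] [DecidableEq ι] {s : Finset ι} {v : ι → F} {P : F[X]}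

theorem sum_eval_div_prod_erase_sub_eq_one (hv : Set.InjOn v s) (hP : P.Monic)
    (hdeg : #s = P.natDegree + 1) :
    ∑ i ∈ s, P.eval (v i) / ∏ j ∈ s.erase i, (v i - v j) = 1 := by
  have hcard : (#s : WithBot ℕ) = P.degree + 1 := by
    rw [degree_eq_natDegree hP.ne_zero, hdeg, Nat.cast_add_one]
  rw [← Lagrange.leadingCoeff_eq_sum hv hcard, hP.leadingCoeff]

theorem sum_eval_div_prod_erase_sub_eq_nextCoeff_add (hv : Set.InjOn v s) (hP : P.Monic)
    (hdeg : P.natDegree = #s) :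
    ∑ i ∈ s, P.eval (v i) / ∏ j ∈ s.erase i, (v i - v j) = P.nextCoeff + ∑ i ∈ s, v i := by
  rcases s.eq_empty_or_nonempty with rfl | hs
  · simp [hP.natDegree_eq_zero.mp hdeg, nextCoeff]
  have hnodal : (Lagrange.nodal s v).coeff (#s - 1) = -∑ i ∈ s, v i :=
    prod_X_sub_C_coeff_card_pred s v hs.card_pos
  have hPdeg : P.degree = #s := by rw [degree_eq_natDegree hP.ne_zero, hdeg]
  have hsub : (P - Lagrange.nodal s v).degree < #s := by
    rw [← hPdeg]
    exact degree_sub_lt_left (hPdeg.trans Lagrange.degree_nodal.symm) hP.ne_zero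
      (hP.leadingCoeff.trans Lagrange.nodal_monic.leadingCoeff.symm)
  calc ∑ i ∈ s, P.eval (v i) / ∏ j ∈ s.erase i, (v i - v j)
      = ∑ i ∈ s, (P - Lagrange.nodal s v).eval (v i) / ∏ j ∈ s.erase i, (v i - v j) :=
        sum_congr rfl fun i hi => by rw [eval_sub, Lagrange.eval_nodal_at_node hi, sub_zero]
    _ = (P - Lagrange.nodal s v).coeff (#s - 1) := (Lagrange.coeff_eq_sum hv hsub).symm
    _ = P.nextCoeff + ∑ i ∈ s, v i := by
        rw [coeff_sub, hnodal, sub_neg_eq_add,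
          nextCoeff_of_natDegree_pos (hdeg ▸ hs.card_pos), hdeg]

end Lagrange

section Coefficients

theorem eval_nodal_neg_sub_one {R ι : Type*} [CommRing R] (lam : ι → R) (s : Finset ι)
    (x : R) : (Lagrange.nodal s fun l => -lam l - 1).eval x = ∏ l ∈ s, (x + lam l + 1) := by
  rw [Lagrange.eval_nodal]
  exact prod_congr rfl fun l _ => by ring

variable {F ι : Type*} [Field F] [DecidableEq ι] {lam : ι → F} {s : Finset ι} {k : ι}

/-- The coefficient of `x ^ λ_j` in the Müntz polynomial with exponents `λ_l`, `l ∈ s`. The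
coefficient `a_{j,n}` is the case `s = {1, …, n}`. -/
def muntzCoeff (lam : ι → F) (s : Finset ι) (j : ι) : F :=
  (∏ l ∈ s, (lam j + lam l + 1)) / ∏ l ∈ s.erase j, (lam j - lam l)

theorem sum_muntzCoeff_div (hinj : Set.InjOn lam s) (hne : ∀ j ∈ s, lam j + lam k + 1 ≠ 0)
    (hk : k ∈ s) : ∑ j ∈ s, muntzCoeff lam s j / (lam j + lam k + 1) = 1 := by
  calc ∑ j ∈ s, muntzCoeff lam s j / (lam j + lam k + 1)
      = ∑ j ∈ s, (Lagrange.nodal (s.erase k) fun l => -lam l - 1).eval (lam j) /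
          ∏ l ∈ s.erase j, (lam j - lam l) := sum_congr rfl fun j hj => by
        rw [muntzCoeff, eval_nodal_neg_sub_one, ← mul_prod_erase _ _ hk, div_right_comm,
          mul_div_cancel_left₀ _ (hne j hj)]
    _ = 1 := sum_eval_div_prod_erase_sub_eq_one hinj Lagrange.nodal_monic
        (by rw [Lagrange.natDegree_nodal, card_erase_add_one hk])

theorem sum_muntzCoeff (hinj : Set.InjOn lam s) :
    ∑ j ∈ s, muntzCoeff lam s j = ∑ j ∈ s, (1 + 2 * lam j) := by
  have hnext : (Lagrange.nodal s fun l => -lam l - 1).nextCoeff = -∑ l ∈ s, (-lam l - 1) :=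
    Polynomial.prod_X_sub_C_nextCoeff _
  calc ∑ j ∈ s, muntzCoeff lam s j
      = (Lagrange.nodal s fun l => -lam l - 1).nextCoeff + ∑ j ∈ s, lam j := by
        simp only [← sum_eval_div_prod_erase_sub_eq_nextCoeff_add hinj Lagrange.nodal_monic
          Lagrange.natDegree_nodal, eval_nodal_neg_sub_one, muntzCoeff]
    _ = ∑ j ∈ s, (1 + 2 * lam j) := by
        rw [hnext, ← sum_neg_distrib, ← sum_add_distrib]
        exact sum_congr rfl fun j _ => by ring

end Coefficients

section SquareIntegrable

variable {α : Type*} {mα : MeasurableSpace α} {μ : Measure α} {f g h : α → ℝ}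

theorem integral_sub_sq_of_integral_mul_eq (hf : MemLp f 2 μ) (hg : MemLp g 2 μ)
    (hgf : ∫ x, g x * f x ∂μ = ∫ x, f x * f x ∂μ) :
    ∫ x, (g x - f x) ^ 2 ∂μ = ∫ x, g x * g x ∂μ - ∫ x, f x * f x ∂μ := by
  have hgg : Integrable (fun x => g x * g x) μ := hg.integrable_mul hg
  have hgf' : Integrable (fun x => 2 * (g x * f x)) μ := (hg.integrable_mul hf).const_mul 2
  have hff : Integrable (fun x => f x * f x) μ := hf.integrable_mul hf
  calc ∫ x, (g x - f x) ^ 2 ∂μ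
      = ∫ x, g x * g x - 2 * (g x * f x) + f x * f x ∂μ :=
        integral_congr_ae (ae_of_all _ fun x => by ring)
    _ = ∫ x, g x * g x ∂μ - 2 * ∫ x, g x * f x ∂μ + ∫ x, f x * f x ∂μ := by
        rw [MeasureTheory.integral_add, MeasureTheory.integral_sub hgg hgf',
          MeasureTheory.integral_const_mul]
        exacts [hgg.sub hgf', hff]
    _ = ∫ x, g x * g x ∂μ - ∫ x, f x * f x ∂μ := by rw [hgf]; ring

theorem integral_sub_sq_le (hf : MemLp f 2 μ) (hg : MemLp g 2 μ) (hh : MemLp h 2 μ) :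
    ∫ x, (f x - g x) ^ 2 ∂μ ≤ 2 * (∫ x, (f x - h x) ^ 2 ∂μ + ∫ x, (g x - h x) ^ 2 ∂μ) := by
  have hfh : Integrable (fun x => (f x - h x) ^ 2) μ := (hf.sub hh).integrable_sq
  have hgh : Integrable (fun x => (g x - h x) ^ 2) μ := (hg.sub hh).integrable_sq
  rw [← MeasureTheory.integral_add hfh hgh, ← MeasureTheory.integral_const_mul]
  refine integral_mono (hf.sub hg).integrable_sq ((hfh.add hgh).const_mul 2) fun x => ?_
  calc (f x - g x) ^ 2 = ((f x - h x) + (h x - g x)) ^ 2 := by ring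
    _ ≤ 2 * ((f x - h x) ^ 2 + (h x - g x) ^ 2) := add_sq_le
    _ = 2 * ((f x - h x) ^ 2 + (g x - h x) ^ 2) := by rw [sub_sq_comm (h x)]

end SquareIntegrable

theorem memLp_two_rpow {a : ℝ} (ha : -(1 / 2) < a) (b : ℝ) :
    MemLp (fun x : ℝ => x ^ a) 2 (volume.restrict (Set.Ioc 0 b)) := by
  rw [memLp_two_iff_integrable_sq (by fun_prop)]
  have hint : IntegrableOn (fun x : ℝ => x ^ (a * 2)) (Set.Ioc 0 b) :=
    (intervalIntegrable_rpow' (by linarith)).1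
  refine hint.congr_fun (fun x hx => ?_) measurableSet_Ioc
  exact_mod_cast Real.rpow_mul_natCast hx.1.le a 2

theorem setIntegral_rpow_mul_rpow {a b : ℝ} (hab : -1 < a + b) :
    ∫ x in Set.Ioc (0 : ℝ) 1, x ^ a * x ^ b = 1 / (a + b + 1) := by
  calc ∫ x in Set.Ioc (0 : ℝ) 1, x ^ a * x ^ b
      = ∫ x in Set.Ioc (0 : ℝ) 1, x ^ (a + b) :=
        setIntegral_congr_fun measurableSet_Ioc fun x hx => (Real.rpow_add hx.1 a b).symm
    _ = ∫ x in (0 : ℝ)..1, x ^ (a + b) := (integral_of_le zero_le_one).symm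
    _ = 1 / (a + b + 1) := by
        rw [integral_rpow (Or.inl hab), Real.one_rpow, Real.zero_rpow (by linarith), sub_zero]

section Kernel

variable {ι : Type*} [DecidableEq ι] {lam : ι → ℝ} {s t : Finset ι}

/-- The Müntz polynomial with exponents `λ_l`, `l ∈ s`. On `L²(0, 1)` it represents evaluation at
`1` on the span of the `x ^ λ_l`; the polynomial `K_n` is the case `s = {1, …, n}`. -/
noncomputable def muntzKernel (lam : ι → ℝ) (s : Finset ι) (x : ℝ) : ℝ :=
  ∑ j ∈ s, muntzCoeff lam s j * x ^ lam j

theorem memLp_two_muntzKernel (hpos : ∀ j ∈ s, -(1 / 2) < lam j) (b : ℝ) :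
    MemLp (muntzKernel lam s) 2 (volume.restrict (Set.Ioc 0 b)) :=
  memLp_finsetSum _ fun j hj => (memLp_two_rpow (hpos j hj) b).const_mul _

theorem setIntegral_muntzKernel_mul_rpow (hpos : ∀ j ∈ s, -(1 / 2) < lam j)
    (hinj : Set.InjOn lam s) {k : ι} (hk : k ∈ s) :
    ∫ x in Set.Ioc (0 : ℝ) 1, muntzKernel lam s x * x ^ lam k = 1 := by
  have hsum {j : ι} (hj : j ∈ s) : -1 < lam j + lam k := by linarith [hpos j hj, hpos k hk]
  have hint (j : ι) (hj : j ∈ s) : IntegrableOn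
      (fun x : ℝ => muntzCoeff lam s j * (x ^ lam j * x ^ lam k)) (Set.Ioc 0 1) :=
    ((memLp_two_rpow (hpos j hj) 1).integrable_mul (memLp_two_rpow (hpos k hk) 1)).const_mul _
  calc ∫ x in Set.Ioc (0 : ℝ) 1, muntzKernel lam s x * x ^ lam k
      = ∑ j ∈ s, ∫ x in Set.Ioc (0 : ℝ) 1, muntzCoeff lam s j * (x ^ lam j * x ^ lam k) := by
        simp only [muntzKernel, sum_mul, mul_assoc, MeasureTheory.integral_finsetSum _ hint]
    _ = ∑ j ∈ s, muntzCoeff lam s j / (lam j + lam k + 1) := sum_congr rfl fun j hj => by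
        rw [MeasureTheory.integral_const_mul, setIntegral_rpow_mul_rpow (hsum hj), mul_one_div]
    _ = 1 := sum_muntzCoeff_div hinj (fun j hj => by linarith [hsum hj]) hk

theorem setIntegral_muntzKernel_mul_sum_rpow (hpos : ∀ j ∈ t, -(1 / 2) < lam j)
    (hinj : Set.InjOn lam t) (hst : s ⊆ t) (c : ι → ℝ) :
    ∫ x in Set.Ioc (0 : ℝ) 1, muntzKernel lam t x * ∑ k ∈ s, c k * x ^ lam k = ∑ k ∈ s, c k := by
  have hint (k : ι) (hk : k ∈ s) : IntegrableOn
      (fun x : ℝ => c k * (muntzKernel lam t x * x ^ lam k)) (Set.Ioc 0 1) :=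
    ((memLp_two_muntzKernel hpos 1).integrable_mul
      (memLp_two_rpow (hpos k (hst hk)) 1)).const_mul _
  simp only [mul_sum, mul_left_comm _ (c _)]
  rw [MeasureTheory.integral_finsetSum _ hint]
  refine sum_congr rfl fun k hk => ?_
  rw [MeasureTheory.integral_const_mul, setIntegral_muntzKernel_mul_rpow hpos hinj (hst hk),
    mul_one]

theorem setIntegral_muntzKernel_mul_muntzKernel (hpos : ∀ j ∈ t, -(1 / 2) < lam j)
    (hinj : Set.InjOn lam t) (hst : s ⊆ t) :
    ∫ x in Set.Ioc (0 : ℝ) 1, muntzKernel lam t x * muntzKernel lam s x =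
      ∑ j ∈ s, (1 + 2 * lam j) :=
  (setIntegral_muntzKernel_mul_sum_rpow hpos hinj hst _).trans (sum_muntzCoeff (hinj.mono hst))

theorem setIntegral_muntzKernel_sub_sq (hpos : ∀ j ∈ t, -(1 / 2) < lam j)
    (hinj : Set.InjOn lam t) (hst : s ⊆ t) :
    ∫ x in Set.Ioc (0 : ℝ) 1, (muntzKernel lam t x - muntzKernel lam s x) ^ 2 =
      ∑ j ∈ t \ s, (1 + 2 * lam j) := by
  have hpos' : ∀ j ∈ s, -(1 / 2) < lam j := fun j hj => hpos j (hst hj)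
  have hts := setIntegral_muntzKernel_mul_muntzKernel hpos hinj hst
  have htt := setIntegral_muntzKernel_mul_muntzKernel hpos hinj subset_rfl
  have hss := setIntegral_muntzKernel_mul_muntzKernel hpos' (hinj.mono hst) subset_rfl
  rw [integral_sub_sq_of_integral_mul_eq (memLp_two_muntzKernel hpos' 1)
    (memLp_two_muntzKernel hpos 1) (hts.trans hss.symm), htt, hss, sum_sdiff_eq_sub hst]

theorem exists_setIntegral_muntzKernel_sub_sq_lt (hpos : ∀ j, -(1 / 2) < lam j)
    (hinj : Function.Injective lam) (hsum : Summable fun j => 1 + 2 * lam j) {ε : ℝ} (hε : 0 < ε) :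
    ∃ r : Finset ι, ∀ s t, r ⊆ s → r ⊆ t →
      ∫ x in Set.Ioc (0 : ℝ) 1, (muntzKernel lam t x - muntzKernel lam s x) ^ 2 < ε := by
  obtain ⟨r, hr⟩ := summable_iff_vanishing_norm.mp hsum (ε / 4) (by positivity)
  have hmem (s : Finset ι) := memLp_two_muntzKernel (s := s) (fun j _ => hpos j) 1
  have hnear (s : Finset ι) (hrs : r ⊆ s) :
      ∫ x in Set.Ioc (0 : ℝ) 1, (muntzKernel lam s x - muntzKernel lam r x) ^ 2 < ε / 4 := by
    rw [setIntegral_muntzKernel_sub_sq (fun j _ => hpos j) hinj.injOn hrs]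
    exact (Real.le_norm_self _).trans_lt (hr _ sdiff_disjoint)
  refine ⟨r, fun s t hrs hrt => ?_⟩
  linarith [integral_sub_sq_le (hmem t) (hmem s) (hmem r), hnear s hrs, hnear t hrt]

theorem muntzKernel_map {κ : Type*} [DecidableEq κ] (e : κ ↪ ι) (lam : ι → ℝ) (s : Finset κ) :
    muntzKernel lam (s.map e) = muntzKernel (lam ∘ e) s := by
  funext x
  simp only [muntzKernel, muntzCoeff, ← map_erase, sum_map, prod_map, Function.comp_apply]

theorem muntzK_L2_cauchy_general (hpos : ∀ j, -(1 / 2) < lam j) (hinj : Function.Injective lam) :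
    (∀ s t : Finset ι, s ⊆ t →
      ∫ u in (0 : ℝ)..1, (muntzKernel lam t u - muntzKernel lam s u) ^ 2 =
        ∑ j ∈ t \ s, (1 + 2 * lam j)) ∧
    ((Summable fun j => 1 + 2 * lam j) →
      ∀ ε : ℝ, 0 < ε → ∃ r : Finset ι, ∀ s t, r ⊆ s → r ⊆ t →
        ∫ u in (0 : ℝ)..1, (muntzKernel lam t u - muntzKernel lam s u) ^ 2 < ε) := by
  simp only [integral_of_le zero_le_one]
  exact ⟨fun s t => setIntegral_muntzKernel_sub_sq (fun j _ => hpos j) hinj.injOn,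
    fun hsum ε => exists_setIntegral_muntzKernel_sub_sq_lt hpos hinj hsum⟩

end Kernel

theorem Icc_succ_eq_map_range_sdiff (m n : ℕ) :
    Icc (m + 1) n = (range n \ range m).map (addRightEmbedding 1) := by
  rw [range_eq_Ico, range_eq_Ico, Ico_sdiff_Ico_left, Nat.zero_max, map_add_right_Ico]
  rfl

theorem muntzK_eq_muntzKernel_range (lam : ℕ → ℝ) (n : ℕ) :
    muntzK lam n = muntzKernel (fun j => lam (j + 1)) (range n) := by
  have hIcc : Icc 1 n = (range n).map (addRightEmbedding 1) := by
    simpa using Icc_succ_eq_map_range_sdiff 0 n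
  calc muntzK lam n = muntzKernel lam (Icc 1 n) := rfl
    _ = muntzKernel (fun j => lam (j + 1)) (range n) := by rw [hIcc, muntzKernel_map]; rfl

theorem muntzK_L2_cauchy (lam : ℕ → ℝ)
    (hpos : ∀ j, 1 ≤ j → lam j > -(1/2 : ℝ))
    (hdist : ∀ j k, 1 ≤ j → 1 ≤ k → j ≠ k → lam j ≠ lam k) :
    (∀ m n : ℕ, m < n →
      (∫ u in (0:ℝ)..1, (muntzK lam n u - muntzK lam m u) ^ 2)
        = ∑ j ∈ Finset.Icc (m + 1) n, (1 + 2 * lam j)) ∧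
    ((Summable fun j : ℕ => 1 + 2 * lam (j + 1)) →
      ∀ ε : ℝ, 0 < ε → ∃ N : ℕ, ∀ m ≥ N, ∀ n ≥ N,
        (∫ u in (0:ℝ)..1, (muntzK lam n u - muntzK lam m u) ^ 2) < ε) := by
  have hinj : Function.Injective fun j => lam (j + 1) := fun j k hjk => by
    by_contra hne
    exact hdist (j + 1) (k + 1) (by simp) (by simp) (by simpa using hne) hjk
  obtain ⟨hnested, hcauchy⟩ := muntzK_L2_cauchy_general (fun j => hpos (j + 1) (by simp)) hinj
  simp only [muntzK_eq_muntzKernel_range]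
  refine ⟨fun m n hmn => ?_, fun hsum ε hε => ?_⟩
  · rw [hnested _ _ (range_mono hmn.le), Icc_succ_eq_map_range_sdiff, sum_map]
    rfl
  · obtain ⟨r, hr⟩ := hcauchy hsum ε hε
    obtain ⟨N, hN⟩ := r.exists_nat_subset_range
    exact ⟨N, fun m hm n hn => hr _ _ (hN.trans (range_mono hm)) (hN.trans (range_mono hn))⟩
end
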